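/- arXiv:2410.15501 — 7 statements merged into one kernel-verified Lean document; each statement's English description precedes it below -/
import Mathlib

section
/- Let ρ be a d×d density matrix, let V be a linear subspace of ℂ^d with orthogonal projection P, and let ψ ∈ ℂ^d be a unit vector. Write ψ_S = Pψ and ψ_⊥ = ψ − Pψ. Then |⟨ψ, ρψ⟩ − ⟨ψ_S, ρψ_S⟩| ≤ 2·√(⟨ψ_⊥, ρψ_⊥⟩). -/
open Matrix
open scoped ComplexOrder

/-! Positive semidefiniteness makes `√⟨x, ρ x⟩` a seminorm, so `⟨ψ, ρ ψ⟩ - ⟨φ, ρ φ⟩` is a difference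
of squares of seminorms. Its factor `√⟨ψ, ρ ψ⟩ + √⟨φ, ρ φ⟩` is at most `2` for `ψ`, `φ` in the unit
ball, because the eigenvalues of `ρ` are at most `tr ρ`; its other factor is controlled by the
reverse triangle inequality. -/

theorem abs_norm_sq_sub_norm_sq_le {E : Type*} [SeminormedAddCommGroup E] (x y : E) :
    |‖x‖ ^ 2 - ‖y‖ ^ 2| ≤ (‖x‖ + ‖y‖) * ‖x - y‖ := by
  rw [sq_sub_sq, abs_mul, abs_of_nonneg (by positivity)]
  gcongr
  exact abs_norm_sub_norm_le x y

theorem norm_inner_self_sub_inner_self_le {𝕜 E : Type*} [RCLike 𝕜] [SeminormedAddCommGroup E]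
    [InnerProductSpace 𝕜 E] (x y : E) :
    ‖inner 𝕜 x x - inner 𝕜 y y‖ ≤
      (√(RCLike.re (inner 𝕜 x x)) + √(RCLike.re (inner 𝕜 y y))) *
        √(RCLike.re (inner 𝕜 (x - y) (x - y))) := by
  simp only [← norm_eq_sqrt_re_inner (𝕜 := 𝕜)]
  rw [inner_self_eq_norm_sq_to_K, inner_self_eq_norm_sq_to_K, ← RCLike.ofReal_pow,
    ← RCLike.ofReal_pow, ← RCLike.ofReal_sub, RCLike.norm_ofReal]
  exact abs_norm_sq_sub_norm_sq_le x y

section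

open scoped MatrixOrder

variable {𝕜 n : Type*} [RCLike 𝕜] [Fintype n]

theorem norm_dotProduct_mulVec_self_sub_le {ρ : Matrix n n 𝕜} (hρ : ρ.PosSemidef) (x y : n → 𝕜) :
    ‖star x ⬝ᵥ ρ *ᵥ x - star y ⬝ᵥ ρ *ᵥ y‖ ≤
      (√(RCLike.re (star x ⬝ᵥ ρ *ᵥ x)) + √(RCLike.re (star y ⬝ᵥ ρ *ᵥ y))) *
        √(RCLike.re (star (x - y) ⬝ᵥ ρ *ᵥ (x - y))) := by
  simp only [dotProduct_comm (star _)]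
  exact @norm_inner_self_sub_inner_self_le 𝕜 (n → 𝕜) _ (ρ.toSeminormedAddCommGroup hρ)
    (ρ.toInnerProductSpace hρ) x y

theorem star_dotProduct_mulVec_self_mono {A B : Matrix n n 𝕜} (hAB : A ≤ B) (x : n → 𝕜) :
    star x ⬝ᵥ A *ᵥ x ≤ star x ⬝ᵥ B *ᵥ x := by
  simpa only [sub_mulVec, dotProduct_sub, sub_nonneg] using
    (Matrix.le_iff.mp hAB).dotProduct_mulVec_nonneg x

theorem star_dotProduct_mulVec_self_le_of_le_one [DecidableEq n] {A : Matrix n n 𝕜} (hA : A ≤ 1)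
    (x : n → 𝕜) : star x ⬝ᵥ A *ᵥ x ≤ star x ⬝ᵥ x := by
  simpa only [one_mulVec] using star_dotProduct_mulVec_self_mono hA x

theorem star_mulVec_dotProduct_mulVec_le_of_isStarProjection {P : Matrix n n 𝕜}
    (hP : IsStarProjection P) (x : n → 𝕜) : star (P *ᵥ x) ⬝ᵥ P *ᵥ x ≤ star x ⬝ᵥ x := by
  classical
  calc star (P *ᵥ x) ⬝ᵥ P *ᵥ x = star x ⬝ᵥ P *ᵥ x := by
        rw [star_mulVec, ← star_eq_conjTranspose, hP.isSelfAdjoint.star_eq, ← dotProduct_mulVec,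
          mulVec_mulVec, hP.isIdempotentElem.eq]
    _ ≤ star x ⬝ᵥ x := star_dotProduct_mulVec_self_le_of_le_one hP.le_one x

variable [DecidableEq n]

theorem eigenvalues_le_re_trace {A : Matrix n n 𝕜} (hA : A.PosSemidef) (i : n) :
    hA.isHermitian.eigenvalues i ≤ RCLike.re A.trace := by
  rw [hA.isHermitian.trace_eq_sum_eigenvalues, ← RCLike.ofReal_sum, RCLike.ofReal_re]
  exact Finset.single_le_sum (fun j _ ↦ hA.eigenvalues_nonneg j) (Finset.mem_univ i)

theorem le_one_of_posSemidef_of_trace_le_one {A : Matrix n n 𝕜} (hA : A.PosSemidef)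
    (htr : A.trace ≤ 1) : A ≤ 1 := by
  refine CFC.le_one (R := ℝ) ?_ hA.isHermitian
  rw [hA.isHermitian.spectrum_real_eq_range_eigenvalues]
  rintro _ ⟨i, rfl⟩
  calc hA.isHermitian.eigenvalues i ≤ RCLike.re A.trace := eigenvalues_le_re_trace hA i
    _ ≤ 1 := by simpa only [RCLike.one_re] using RCLike.re_le_re htr

theorem stmt_1_general {ρ : Matrix n n 𝕜} (hρ : ρ.PosSemidef) (hρ_le : ρ ≤ 1) {ψ φ : n → 𝕜}
    (hψ : star ψ ⬝ᵥ ψ ≤ 1) (hφ : star φ ⬝ᵥ φ ≤ 1) :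
    ‖star ψ ⬝ᵥ ρ *ᵥ ψ - star φ ⬝ᵥ ρ *ᵥ φ‖ ≤
      2 * √(RCLike.re (star (ψ - φ) ⬝ᵥ ρ *ᵥ (ψ - φ))) := by
  have sqrt_le_one {x : n → 𝕜} (hx : star x ⬝ᵥ x ≤ 1) :
      √(RCLike.re (star x ⬝ᵥ ρ *ᵥ x)) ≤ 1 := by
    rw [Real.sqrt_le_one]
    simpa only [RCLike.one_re] using
      RCLike.re_le_re ((star_dotProduct_mulVec_self_le_of_le_one hρ_le x).trans hx)
  refine (norm_dotProduct_mulVec_self_sub_le hρ ψ φ).trans ?_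
  gcongr
  linarith [sqrt_le_one hψ, sqrt_le_one hφ]

end

/-- Let `ρ` be a `d × d` density matrix, let `P` be the orthogonal projection
onto a linear subspace of `ℂ^d` (i.e. `P` is Hermitian and idempotent), and let `ψ` be a unit
vector. Writing `ψ_S = P ψ` and `ψ_⊥ = ψ - P ψ`, we have
`|⟨ψ, ρ ψ⟩ - ⟨ψ_S, ρ ψ_S⟩| ≤ 2 √(⟨ψ_⊥, ρ ψ_⊥⟩)`. -/
theorem stmt_1 {d : ℕ} (ρ : Matrix (Fin d) (Fin d) ℂ)
    (hρ : ρ.PosSemidef) (hρtr : ρ.trace = 1)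
    (P : Matrix (Fin d) (Fin d) ℂ) (hPH : P.IsHermitian) (hPP : P * P = P)
    (ψ : Fin d → ℂ) (hψ : star ψ ⬝ᵥ ψ = 1) :
    ‖(star ψ ⬝ᵥ ρ *ᵥ ψ) - (star (P *ᵥ ψ) ⬝ᵥ ρ *ᵥ (P *ᵥ ψ))‖ ≤
      2 * Real.sqrt ((star (ψ - P *ᵥ ψ) ⬝ᵥ ρ *ᵥ (ψ - P *ᵥ ψ)).re) := by
  exact stmt_1_general hρ (le_one_of_posSemidef_of_trace_le_one hρ hρtr.le) hψ.le
    ((star_mulVec_dotProduct_mulVec_le_of_isStarProjection ⟨hPP, hPH⟩ ψ).trans hψ.le)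
end

section
/- Let ρ be a d×d density matrix and ε ∈ (0,1]. Let ψ^1, …, ψ^m ∈ ℂ^d be unit vectors and ô_1, …, ô_m ∈ ℝ. Define inductively: round t is a 'mistake' if |ô_t − ⟨ψ^t, ρψ^t⟩| ≥ (3/4)ε, and let S_t be the linear span of {ψ^r : r < t, round r is a mistake}, with P_t the orthogonal projection onto S_t. Suppose that for every t ∈ {1, …, m} the estimate satisfies |ô_t − ⟨P_t ψ^t, ρ P_t ψ^t⟩| < (3/8)ε. Then the number of mistakes among the m rounds is at most 256/(9ε²). -/
open Matrix
open scoped ComplexOrder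

/-!
Let `ηₜ = ψₜ - Pₜ ψₜ` be the part of a mistaken query that is orthogonal to the earlier mistaken
queries. The vectors `ηₜ` are pairwise orthogonal and of norm at most one, so Bessel's inequality,
applied to the rows of `ρ`, bounds `∑ₜ ‖ρ ηₜ‖²` by the squared Frobenius norm `‖ρ‖²`, and likewise
`∑ₜ ‖ρᴴ ηₜ‖²`. Since
`⟨ψₜ, ρ ψₜ⟩ - ⟨Pₜ ψₜ, ρ Pₜ ψₜ⟩ = ⟨ψₜ, ρ ηₜ⟩ + ⟨ρᴴ ηₜ, Pₜ ψₜ⟩`,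
a discrepancy of at least `c` at every mistake forces `c² ≤ 2 (‖ρ ηₜ‖² + ‖ρᴴ ηₜ‖²)`, whence there
are at most `4 ‖ρ‖² / c²` mistakes. For a density matrix `‖ρ‖ ≤ tr ρ = 1`.
-/

theorem finite_and_ncard_le_of_forall_finset_card_le {ι : Type*} {M : Set ι} {B : ℝ}
    (h : ∀ s : Finset ι, (s : Set ι) ⊆ M → (s.card : ℝ) ≤ B) :
    M.Finite ∧ (M.ncard : ℝ) ≤ B := by
  have hM : M.Finite := by
    by_contra hinf
    obtain ⟨s, hsM, hs⟩ := Set.Infinite.exists_subset_card_eq hinf (⌊B⌋₊ + 1)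
    have hlt : B < s.card := by rw [hs]; exact_mod_cast Nat.lt_floor_add_one B
    exact hlt.not_ge (h s hsM)
  refine ⟨hM, ?_⟩
  rw [Set.ncard_eq_toFinset_card M hM]
  exact h _ (by simp)

section InnerProductSpace

variable {𝕜 E ι : Type*} [RCLike 𝕜] [NormedAddCommGroup E] [InnerProductSpace 𝕜 E]

theorem norm_sum_sq_eq_of_pairwise_inner_eq_zero {s : Finset ι} {v : ι → E}
    (hv : (s : Set ι).Pairwise fun i j => inner 𝕜 (v i) (v j) = 0) :
    ‖∑ i ∈ s, v i‖ ^ 2 = ∑ i ∈ s, ‖v i‖ ^ 2 := by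
  have hdiag : ∀ i ∈ s, ∑ j ∈ s, inner 𝕜 (v i) (v j) = inner 𝕜 (v i) (v i) := fun i hi =>
    Finset.sum_eq_single_of_mem i hi fun j hj hji => hv hi hj hji.symm
  rw [← inner_self_eq_norm_sq (𝕜 := 𝕜), sum_inner]
  simp_rw [inner_sum]
  rw [Finset.sum_congr rfl hdiag, map_sum]
  simp_rw [inner_self_eq_norm_sq]

theorem sum_norm_inner_sq_le_of_pairwise_inner_eq_zero {s : Finset ι} {v : ι → E}
    (hv : (s : Set ι).Pairwise fun i j => inner 𝕜 (v i) (v j) = 0)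
    (hv_norm : ∀ i ∈ s, ‖v i‖ ≤ 1) (x : E) :
    ∑ i ∈ s, ‖inner 𝕜 (v i) x‖ ^ 2 ≤ ‖x‖ ^ 2 := by
  set y : E := ∑ i ∈ s, inner 𝕜 (v i) x • v i with hy
  set Q : ℝ := ∑ i ∈ s, ‖inner 𝕜 (v i) x‖ ^ 2 with hQ
  have hyQ : ‖y‖ ^ 2 ≤ Q := by
    have hsmul : (s : Set ι).Pairwise fun i j =>
        inner 𝕜 (inner 𝕜 (v i) x • v i) (inner 𝕜 (v j) x • v j) = 0 := by
      intro i hi j hj hij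
      simp only [inner_smul_left, inner_smul_right, hv hi hj hij, mul_zero]
    rw [hy, norm_sum_sq_eq_of_pairwise_inner_eq_zero hsmul]
    refine Finset.sum_le_sum fun i hi => ?_
    rw [norm_smul]
    gcongr
    exact mul_le_of_le_one_right (norm_nonneg _) (hv_norm i hi)
  have hQ_inner : inner 𝕜 y x = (Q : 𝕜) := by
    simp only [hy, hQ, sum_inner, inner_smul_left, RCLike.conj_mul, RCLike.ofReal_sum,
      RCLike.ofReal_pow]
  have hQy : Q ≤ ‖y‖ * ‖x‖ := by
    calc Q ≤ ‖(Q : 𝕜)‖ := by rw [RCLike.norm_ofReal]; exact le_abs_self Q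
      _ ≤ ‖y‖ * ‖x‖ := hQ_inner ▸ norm_inner_le_norm y x
  nlinarith [sq_nonneg (‖y‖ - ‖x‖)]

theorem norm_inner_map_self_sub_inner_map_self_le [FiniteDimensional 𝕜 E] (T : E →ₗ[𝕜] E) {x y : E}
    (hx : ‖x‖ ≤ 1) (hy : ‖y‖ ≤ 1) :
    ‖inner 𝕜 x (T x) - inner 𝕜 y (T y)‖ ≤ ‖T (x - y)‖ + ‖T.adjoint (x - y)‖ := by
  have hsplit : inner 𝕜 x (T x) - inner 𝕜 y (T y) =
      inner 𝕜 x (T (x - y)) + inner 𝕜 (T.adjoint (x - y)) y := by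
    rw [LinearMap.adjoint_inner_left, map_sub, inner_sub_right, inner_sub_left]
    ring
  calc ‖inner 𝕜 x (T x) - inner 𝕜 y (T y)‖
      ≤ ‖x‖ * ‖T (x - y)‖ + ‖T.adjoint (x - y)‖ * ‖y‖ := by
        rw [hsplit]
        exact (norm_add_le _ _).trans
          (add_le_add (norm_inner_le_norm _ _) (norm_inner_le_norm _ _))
    _ ≤ ‖T (x - y)‖ + ‖T.adjoint (x - y)‖ :=
        add_le_add (mul_le_of_le_one_left (norm_nonneg _) hx)
          (mul_le_of_le_one_right (norm_nonneg _) hy)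

theorem pairwise_inner_sub_starProjection_eq_zero [LinearOrder ι] {S : ι → Submodule 𝕜 E}
    [∀ t, (S t).HasOrthogonalProjection] (hS : Monotone S) {M : Set ι} {ψ : ι → E}
    (hψ : ∀ r ∈ M, ∀ t, r < t → ψ r ∈ S t) :
    M.Pairwise fun r t =>
      inner 𝕜 (ψ r - (S r).starProjection (ψ r)) (ψ t - (S t).starProjection (ψ t)) = 0 := by
  have hlt : ∀ r ∈ M, ∀ t, r < t →
      inner 𝕜 (ψ r - (S r).starProjection (ψ r)) (ψ t - (S t).starProjection (ψ t)) = 0 :=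
    fun r hr t hrt => (S t).sub_starProjection_mem_orthogonal (ψ t) _ <|
      (S t).sub_mem (hψ r hr t hrt) (hS hrt.le ((S r).starProjection_apply_mem (ψ r)))
  intro r hr t ht hrt
  rcases hrt.lt_or_gt with hrt | htr
  · exact hlt r hr t hrt
  · exact inner_eq_zero_symm.1 (hlt t ht r htr)

theorem norm_sub_starProjection_le (K : Submodule 𝕜 E) [K.HasOrthogonalProjection] (x : E) :
    ‖x - K.starProjection x‖ ≤ ‖x‖ := by
  rw [← K.starProjection_orthogonal_val]
  exact Kᗮ.norm_starProjection_apply_le x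

end InnerProductSpace

section Frobenius

open scoped Matrix.Norms.Frobenius

variable {𝕜 m n ι : Type*} [RCLike 𝕜] [Fintype m] [Fintype n]

theorem frobenius_norm_sq (A : Matrix m n 𝕜) : ‖A‖ ^ 2 = ∑ i, ∑ j, ‖A i j‖ ^ 2 := by
  rw [frobenius_norm_def, ← Real.sqrt_eq_rpow, Real.sq_sqrt (by positivity)]
  simp_rw [Real.rpow_two]

theorem trace_conjTranspose_mul_self_eq_frobenius_norm_sq (B : Matrix m n 𝕜) :
    (Bᴴ * B).trace = ((‖B‖ ^ 2 : ℝ) : 𝕜) := by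
  rw [frobenius_norm_sq, Finset.sum_comm]
  simp [trace, mul_apply, RCLike.conj_mul]

theorem frobenius_norm_le_norm_trace {A : Matrix n n 𝕜} (hA : A.PosSemidef) : ‖A‖ ≤ ‖A.trace‖ := by
  classical
  obtain ⟨B, rfl⟩ : ∃ B : Matrix n n 𝕜, A = Bᴴ * B := by
    open scoped MatrixOrder in
    exact CStarAlgebra.nonneg_iff_eq_star_mul_self.1 hA.nonneg
  calc ‖Bᴴ * B‖ ≤ ‖Bᴴ‖ * ‖B‖ := frobenius_norm_mul _ _
    _ = ‖(Bᴴ * B).trace‖ := by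
      rw [frobenius_norm_conjTranspose, trace_conjTranspose_mul_self_eq_frobenius_norm_sq,
        RCLike.norm_of_nonneg (by positivity), sq]

theorem sum_norm_toEuclideanLin_sq_le [DecidableEq n] (A : Matrix m n 𝕜) {s : Finset ι}
    {v : ι → EuclideanSpace 𝕜 n}
    (hv : (s : Set ι).Pairwise fun i j => inner 𝕜 (v i) (v j) = 0)
    (hv_norm : ∀ i ∈ s, ‖v i‖ ≤ 1) :
    ∑ t ∈ s, ‖A.toEuclideanLin (v t)‖ ^ 2 ≤ ‖A‖ ^ 2 := by
  let row (i : m) : EuclideanSpace 𝕜 n := WithLp.toLp 2 (star (A i))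
  have hrow (i : m) (x : EuclideanSpace 𝕜 n) :
      ‖A.toEuclideanLin x i‖ = ‖inner 𝕜 x (row i)‖ := by
    rw [norm_inner_symm, EuclideanSpace.inner_eq_star_dotProduct, star_star, dotProduct_comm]
    rfl
  calc ∑ t ∈ s, ‖A.toEuclideanLin (v t)‖ ^ 2
      = ∑ i, ∑ t ∈ s, ‖inner 𝕜 (v t) (row i)‖ ^ 2 := by
        simp_rw [EuclideanSpace.norm_sq_eq, hrow]
        exact Finset.sum_comm
    _ ≤ ∑ i, ‖row i‖ ^ 2 :=
        Finset.sum_le_sum fun i _ =>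
          sum_norm_inner_sq_le_of_pairwise_inner_eq_zero hv hv_norm (row i)
    _ = ‖A‖ ^ 2 := by
        simp [frobenius_norm_sq, EuclideanSpace.norm_sq_eq, row]

theorem card_le_of_le_norm_inner_sub_inner_starProjection [LinearOrder ι] [DecidableEq n]
    (A : Matrix n n 𝕜) {S : ι → Submodule 𝕜 (EuclideanSpace 𝕜 n)} (hS : Monotone S) {s : Finset ι}
    {ψ : ι → EuclideanSpace 𝕜 n} (hψS : ∀ r ∈ s, ∀ t, r < t → ψ r ∈ S t)
    (hψ : ∀ t ∈ s, ‖ψ t‖ ≤ 1) {c : ℝ} (hc : 0 < c)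
    (hgap : ∀ t ∈ s, c ≤ ‖inner 𝕜 (ψ t) (A.toEuclideanLin (ψ t)) -
      inner 𝕜 ((S t).starProjection (ψ t)) (A.toEuclideanLin ((S t).starProjection (ψ t)))‖) :
    (s.card : ℝ) ≤ (2 * ‖A‖ / c) ^ 2 := by
  let η (t : ι) : EuclideanSpace 𝕜 n := ψ t - (S t).starProjection (ψ t)
  have hη_orthogonal : (s : Set ι).Pairwise fun r t => inner 𝕜 (η r) (η t) = 0 :=
    pairwise_inner_sub_starProjection_eq_zero hS hψS
  have hη_norm : ∀ t ∈ s, ‖η t‖ ≤ 1 := fun t ht =>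
    (norm_sub_starProjection_le (S t) (ψ t)).trans (hψ t ht)
  have hη_gap : ∀ t ∈ s,
      c ^ 2 ≤ 2 * (‖A.toEuclideanLin (η t)‖ ^ 2 + ‖Aᴴ.toEuclideanLin (η t)‖ ^ 2) := by
    intro t ht
    have hsum : c ≤ ‖A.toEuclideanLin (η t)‖ + ‖Aᴴ.toEuclideanLin (η t)‖ := by
      rw [toEuclideanLin_conjTranspose_eq_adjoint]
      exact (hgap t ht).trans <| norm_inner_map_self_sub_inner_map_self_le _ (hψ t ht) <|
        ((S t).norm_starProjection_apply_le (ψ t)).trans (hψ t ht)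
    exact (pow_le_pow_left₀ hc.le hsum 2).trans add_sq_le
  have hcard : s.card * c ^ 2 ≤ (2 * ‖A‖) ^ 2 := by
    calc s.card * c ^ 2 = ∑ _t ∈ s, c ^ 2 := by rw [Finset.sum_const, nsmul_eq_mul]
      _ ≤ 2 * (∑ t ∈ s, ‖A.toEuclideanLin (η t)‖ ^ 2 +
            ∑ t ∈ s, ‖Aᴴ.toEuclideanLin (η t)‖ ^ 2) := by
          rw [← Finset.sum_add_distrib, Finset.mul_sum]
          exact Finset.sum_le_sum hη_gap
      _ ≤ 2 * (‖A‖ ^ 2 + ‖Aᴴ‖ ^ 2) := by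
          gcongr <;> exact sum_norm_toEuclideanLin_sq_le _ hη_orthogonal hη_norm
      _ = (2 * ‖A‖) ^ 2 := by rw [frobenius_norm_conjTranspose]; ring
  rwa [div_pow, le_div_iff₀ (by positivity)]

theorem star_dotProduct_mulVec_eq_inner [DecidableEq n] (A : Matrix m n 𝕜) (x : m → 𝕜)
    (y : n → 𝕜) :
    star x ⬝ᵥ A *ᵥ y = inner 𝕜 (WithLp.toLp 2 x) (A.toEuclideanLin (WithLp.toLp 2 y)) :=
  dotProduct_comm _ _

theorem norm_star_dotProduct_self (x : n → 𝕜) :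
    ‖star x ⬝ᵥ x‖ = ‖(WithLp.toLp 2 x : EuclideanSpace 𝕜 n)‖ ^ 2 := by
  rw [dotProduct_comm, ← EuclideanSpace.inner_toLp_toLp, inner_self_eq_norm_sq_to_K, norm_pow,
    RCLike.norm_ofReal, abs_norm]

theorem toLp_mulVec_eq_starProjection {P : Matrix n n 𝕜} (hP : P.IsHermitian)
    {K : Submodule 𝕜 (n → 𝕜)} (hmem : ∀ v, P *ᵥ v ∈ K) (hfix : ∀ v ∈ K, P *ᵥ v = v) (x : n → 𝕜) :
    WithLp.toLp 2 (P *ᵥ x) =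
      (K.comap (WithLp.linearEquiv 2 𝕜 (n → 𝕜)).toLinearMap).starProjection (WithLp.toLp 2 x) := by
  refine (Submodule.eq_starProjection_of_mem_orthogonal (hmem x) fun w hw => ?_).symm
  calc inner 𝕜 w (WithLp.toLp 2 x - WithLp.toLp 2 (P *ᵥ x))
      = star w.ofLp ⬝ᵥ (x - P *ᵥ x) := dotProduct_comm _ _
    _ = star (P *ᵥ w.ofLp) ⬝ᵥ (x - P *ᵥ x) := by rw [hfix w.ofLp hw]
    _ = star w.ofLp ⬝ᵥ P *ᵥ (x - P *ᵥ x) := by rw [star_mulVec, hP.eq, dotProduct_mulVec]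
    _ = 0 := by rw [mulVec_sub, hfix _ (hmem x), sub_self, dotProduct_zero]

theorem stmt_2_general [LinearOrder ι] {ρ : Matrix n n 𝕜} {F : ℝ} (hρF : ‖ρ‖ ≤ F)
    {τ δ : ℝ} (hδτ : δ < τ) {ψ : ι → n → 𝕜} (hψ : ∀ t, ‖star (ψ t) ⬝ᵥ ψ t‖ ≤ 1)
    {ohat : ι → 𝕜} {mistake : ι → Prop}
    (hmistake : ∀ t, mistake t → τ ≤ ‖ohat t - star (ψ t) ⬝ᵥ ρ *ᵥ ψ t‖)
    {P : ι → Matrix n n 𝕜} (hPH : ∀ t, (P t).IsHermitian)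
    (hPmem : ∀ t v, P t *ᵥ v ∈ Submodule.span 𝕜 {x | ∃ r, r < t ∧ mistake r ∧ x = ψ r})
    (hPfix : ∀ t, ∀ v ∈ Submodule.span 𝕜 {x | ∃ r, r < t ∧ mistake r ∧ x = ψ r}, P t *ᵥ v = v)
    (hest : ∀ t, ‖ohat t - star (P t *ᵥ ψ t) ⬝ᵥ ρ *ᵥ (P t *ᵥ ψ t)‖ ≤ δ) :
    {t | mistake t}.Finite ∧ ({t | mistake t}.ncard : ℝ) ≤ (2 * F / (τ - δ)) ^ 2 := by
  classical
  have hτδ : 0 < τ - δ := sub_pos.2 hδτ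
  let S (t : ι) : Submodule 𝕜 (EuclideanSpace 𝕜 n) :=
    (Submodule.span 𝕜 {x | ∃ r, r < t ∧ mistake r ∧ x = ψ r}).comap
      (WithLp.linearEquiv 2 𝕜 (n → 𝕜)).toLinearMap
  have hS : Monotone S := fun r t hrt => Submodule.comap_mono <| Submodule.span_mono <| by
    rintro x ⟨q, hqr, hq⟩
    exact ⟨q, hqr.trans_le hrt, hq⟩
  have hψS : ∀ r, mistake r → ∀ t, r < t → WithLp.toLp 2 (ψ r) ∈ S t := fun r hr t hrt =>
    Submodule.subset_span ⟨r, hrt, hr, rfl⟩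
  have hψ_norm (t : ι) : ‖(WithLp.toLp 2 (ψ t) : EuclideanSpace 𝕜 n)‖ ≤ 1 :=
    (sq_le_one_iff₀ (norm_nonneg _)).1 (norm_star_dotProduct_self (ψ t) ▸ hψ t)
  have hgap : ∀ t, mistake t → τ - δ ≤ ‖star (ψ t) ⬝ᵥ ρ *ᵥ ψ t -
      star (P t *ᵥ ψ t) ⬝ᵥ ρ *ᵥ (P t *ᵥ ψ t)‖ := by
    intro t ht
    have htri := norm_sub_norm_le (ohat t - star (ψ t) ⬝ᵥ ρ *ᵥ ψ t)
      (ohat t - star (P t *ᵥ ψ t) ⬝ᵥ ρ *ᵥ (P t *ᵥ ψ t))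
    rw [sub_sub_sub_cancel_left] at htri
    rw [norm_sub_rev]
    linarith [hmistake t ht, hest t]
  refine finite_and_ncard_le_of_forall_finset_card_le fun s hs => ?_
  have hcard : (s.card : ℝ) ≤ (2 * ‖ρ‖ / (τ - δ)) ^ 2 := by
    refine card_le_of_le_norm_inner_sub_inner_starProjection ρ hS (fun r hr => hψS r (hs hr))
      (fun t _ => hψ_norm t) hτδ fun t ht => ?_
    rw [← toLp_mulVec_eq_starProjection (hPH t) (hPmem t) (hPfix t),
      ← star_dotProduct_mulVec_eq_inner, ← star_dotProduct_mulVec_eq_inner]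
    exact hgap t (hs ht)
  exact hcard.trans (by gcongr)

end Frobenius

/-- **mistake bound for single-rank observables.**
Let `ρ` be a `d × d` density matrix and `ε ∈ (0,1]`.  Let `ψ 1, …, ψ m` be unit vectors in
`ℂ^d` and `ô 1, …, ô m` real estimates.  Round `t` is a *mistake* iff
`|ô t - ⟨ψ t, ρ ψ t⟩| ≥ (3/4) ε`; let `S t` be the span of the `ψ r` with `r < t` at which a
mistake occurred, and let `P t` be the orthogonal projection onto `S t` (encoded as a Hermitian
idempotent matrix fixing `S t` pointwise and with range inside `S t`).  If for every round the
estimate satisfies `|ô t - ⟨P t ψ t, ρ (P t ψ t)⟩| < (3/8) ε`, then the number of mistakes is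
at most `256 / (9 ε²)`. -/
theorem stmt_2 {d m : ℕ} (ρ : Matrix (Fin d) (Fin d) ℂ)
    (hρ : ρ.PosSemidef) (hρtr : ρ.trace = 1)
    (ε : ℝ) (hε0 : 0 < ε) (hε1 : ε ≤ 1)
    (ψ : Fin m → (Fin d → ℂ)) (hψ : ∀ t, star (ψ t) ⬝ᵥ ψ t = 1)
    (ohat : Fin m → ℝ)
    (mistake : Fin m → Prop)
    (hmistake : ∀ t, mistake t ↔
      3 / 4 * ε ≤ ‖(ohat t : ℂ) - star (ψ t) ⬝ᵥ ρ *ᵥ ψ t‖)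
    (P : Fin m → Matrix (Fin d) (Fin d) ℂ)
    (hPH : ∀ t, (P t).IsHermitian) (hPP : ∀ t, P t * P t = P t)
    (hPmem : ∀ t v, P t *ᵥ v ∈
      Submodule.span ℂ {x | ∃ r : Fin m, r < t ∧ mistake r ∧ x = ψ r})
    (hPfix : ∀ t, ∀ v ∈ Submodule.span ℂ {x | ∃ r : Fin m, r < t ∧ mistake r ∧ x = ψ r},
      P t *ᵥ v = v)
    (hest : ∀ t, ‖(ohat t : ℂ) - star (P t *ᵥ ψ t) ⬝ᵥ ρ *ᵥ (P t *ᵥ ψ t)‖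
      < 3 / 8 * ε) :
    ({t : Fin m | mistake t}.ncard : ℝ) ≤ 256 / (9 * ε ^ 2) := by
  have hbound := (stmt_2_general (F := 1) (by simpa [hρtr] using frobenius_norm_le_norm_trace hρ)
    (by linarith) (fun t => by rw [hψ, norm_one]) (fun t => (hmistake t).1) hPH hPmem hPfix
    (fun t => (hest t).le)).2
  exact hbound.trans_eq (by field_simp; norm_num)
end

section
/- For every d×d density matrix ρ and every ε ∈ (0,1], there exists a linear subspace S of ℂ^d with dim S ≤ 4/ε² such that, with P the orthogonal projection onto S, every unit vector ψ ∈ ℂ^d satisfies |⟨ψ, ρψ⟩ − ⟨Pψ, ρPψ⟩| ≤ ε. -/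
open Matrix
open scoped ComplexOrder

/-! Let `P` be the spectral projection of a positive semidefinite matrix `A` onto `(ε, ∞)`. Since
`A - P * A * P` is the spectral part of `A` on `[0, ε]`, it lies between `0` and `ε` in the Loewner
order. The operator Markov inequality `ε P ≤ A` bounds the rank of `P`: taking traces gives
`ε rank P ≤ tr A`, which for a density matrix reads `rank P ≤ 1 / ε`. -/

theorem trace_eq_rank_of_isIdempotentElem {K n : Type*} [Field K] [Fintype n] {P : Matrix n n K}
    (hP : IsIdempotentElem P) : P.trace = P.rank := by
  classical
  have hproj : IsIdempotentElem P.toLin' := hP.map (Matrix.toLinAlgEquiv' (R := K) (n := n))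
  rw [← Matrix.trace_toLin'_eq, (LinearMap.IsIdempotentElem.isProj_range _ hproj).trace,
    Matrix.rank, toLin'_apply']

theorem dotProduct_mulVec_sub_conj_mulVec {R n : Type*} [NonUnitalRing R] [StarRing R] [Fintype n]
    {P : Matrix n n R} (hP : P.IsHermitian) (A : Matrix n n R) (ψ : n → R) :
    star ψ ⬝ᵥ A *ᵥ ψ - star (P *ᵥ ψ) ⬝ᵥ A *ᵥ (P *ᵥ ψ) = star ψ ⬝ᵥ (A - P * A * P) *ᵥ ψ := by
  rw [sub_mulVec, dotProduct_sub, star_mulVec, hP.eq, ← dotProduct_mulVec, mulVec_mulVec,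
    mulVec_mulVec, Matrix.mul_assoc]

section RCLike

open scoped MatrixOrder

variable {𝕜 n : Type*} [RCLike 𝕜] [Fintype n] [DecidableEq n] {A : Matrix n n 𝕜}

theorem norm_dotProduct_mulVec_le {c : ℝ} (hA : 0 ≤ A) (hAc : A ≤ algebraMap ℝ (Matrix n n 𝕜) c)
    (ψ : n → 𝕜) : ‖star ψ ⬝ᵥ A *ᵥ ψ‖ ≤ c * RCLike.re (star ψ ⬝ᵥ ψ) := by
  have hnonneg : 0 ≤ star ψ ⬝ᵥ A *ᵥ ψ := hA.posSemidef.dotProduct_mulVec_nonneg ψ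
  have hle : 0 ≤ RCLike.re (star ψ ⬝ᵥ (algebraMap ℝ (Matrix n n 𝕜) c - A) *ᵥ ψ) :=
    (Matrix.le_iff.mp hAc).re_dotProduct_nonneg ψ
  have hnorm : ‖star ψ ⬝ᵥ A *ᵥ ψ‖ = RCLike.re (star ψ ⬝ᵥ A *ᵥ ψ) := by
    simpa using congrArg RCLike.re (RCLike.norm_of_nonneg' hnonneg)
  rw [hnorm]
  simpa [sub_mulVec, Algebra.algebraMap_eq_smul_one, smul_mulVec, RCLike.smul_re] using hle

/-- The spectral projection of a Hermitian matrix `A` onto the sum of its eigenspaces with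
eigenvalue in `s`; it cuts out the subspace to which `A` is compressed. When `A` is not Hermitian,
this is the junk value `0` of `cfc`. -/
noncomputable def spectralProjection (A : Matrix n n 𝕜) (s : Set ℝ) : Matrix n n 𝕜 :=
  cfc (s.indicator 1) A

theorem isStarProjection_spectralProjection (A : Matrix n n 𝕜) (s : Set ℝ) :
    IsStarProjection (spectralProjection A s) where
  isIdempotentElem := by
    have hind := A.finite_real_spectrum.continuousOn (s.indicator (1 : ℝ → ℝ))
    rw [IsIdempotentElem, spectralProjection, ← cfc_mul _ _ A hind hind]
    congr 1
    ext x
    by_cases hx : x ∈ s <;> simp [hx]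
  isSelfAdjoint := cfc_predicate _ A

theorem sub_conj_spectralProjection (hA : A.IsHermitian) (s : Set ℝ) :
    A - spectralProjection A s * A * spectralProjection A s = cfc (sᶜ.indicator id) A := by
  have hcont (f : ℝ → ℝ) : ContinuousOn f (spectrum ℝ A) := A.finite_real_spectrum.continuousOn f
  have hsa : IsSelfAdjoint A := hA
  calc A - spectralProjection A s * A * spectralProjection A s
      = cfc id A - cfc (s.indicator 1) A * cfc id A * cfc (s.indicator 1) A := by
        rw [cfc_id ℝ A, spectralProjection]
    _ = cfc (fun x ↦ id x - s.indicator 1 x * id x * s.indicator 1 x) A := by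
        rw [← cfc_mul _ _ A (hcont _) (hcont _), ← cfc_mul _ _ A (hcont _) (hcont _),
          ← cfc_sub _ _ A (hcont _) (hcont _)]
    _ = cfc (sᶜ.indicator id) A := by
        congr 1
        ext x
        by_cases hx : x ∈ s <;> simp [hx]

theorem sub_conj_spectralProjection_nonneg (hA : 0 ≤ A) (s : Set ℝ) :
    0 ≤ A - spectralProjection A s * A * spectralProjection A s := by
  rw [sub_conj_spectralProjection hA.posSemidef.isHermitian]
  exact cfc_nonneg fun x hx ↦
    Set.indicator_nonneg (fun _ _ ↦ spectrum_nonneg_of_nonneg hA hx) x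

theorem sub_conj_spectralProjection_Ioi_le {ε : ℝ} (hA : A.IsHermitian) (hε : 0 ≤ ε) :
    A - spectralProjection A (Set.Ioi ε) * A * spectralProjection A (Set.Ioi ε) ≤
      algebraMap ℝ (Matrix n n 𝕜) ε := by
  rw [sub_conj_spectralProjection hA]
  refine cfc_le_algebraMap _ ε A (fun x _ ↦ ?_) (A.finite_real_spectrum.continuousOn _) hA
  exact Set.indicator_le' (fun y hy ↦ not_lt.mp hy) (fun _ _ ↦ hε) x

theorem smul_spectralProjection_Ioi_le (hA : 0 ≤ A) (ε : ℝ) :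
    ε • spectralProjection A (Set.Ioi ε) ≤ A := by
  have hcont (f : ℝ → ℝ) : ContinuousOn f (spectrum ℝ A) := A.finite_real_spectrum.continuousOn f
  have hsa : IsSelfAdjoint A := hA.posSemidef.isHermitian
  calc ε • spectralProjection A (Set.Ioi ε)
      = cfc (fun x ↦ ε • (Set.Ioi ε).indicator 1 x) A := (cfc_smul ε _ A (hcont _)).symm
    _ ≤ cfc id A := by
        refine cfc_mono (fun x hx ↦ ?_) (hcont _) (hcont _)
        by_cases hεx : ε < x
        · simpa [hεx] using hεx.le
        · simpa [hεx] using spectrum_nonneg_of_nonneg hA hx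
    _ = A := cfc_id ℝ A

theorem mul_rank_spectralProjection_Ioi_le (hA : 0 ≤ A) (ε : ℝ) :
    ε * (spectralProjection A (Set.Ioi ε)).rank ≤ RCLike.re A.trace := by
  have hrank := trace_eq_rank_of_isIdempotentElem
    (isStarProjection_spectralProjection A (Set.Ioi ε)).isIdempotentElem
  have htrace : (ε • spectralProjection A (Set.Ioi ε)).trace ≤ A.trace :=
    OrderHomClass.mono (tracePositiveLinearMap n 𝕜 𝕜) (smul_spectralProjection_Ioi_le hA ε)
  simpa only [trace_smul, hrank, RCLike.smul_re, RCLike.natCast_re] using RCLike.re_le_re htrace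

end RCLike

theorem stmt_3_general {𝕜 n : Type*} [RCLike 𝕜] [Fintype n] {A : Matrix n n 𝕜}
    (hA : A.PosSemidef) {ε : ℝ} (hε : 0 < ε) :
    ∃ (S : Submodule 𝕜 (n → 𝕜)) (P : Matrix n n 𝕜),
      (Module.finrank 𝕜 S : ℝ) ≤ RCLike.re A.trace / ε ∧
      P.IsHermitian ∧ P * P = P ∧
      (∀ v, P *ᵥ v ∈ S) ∧ (∀ v ∈ S, P *ᵥ v = v) ∧
      ∀ ψ : n → 𝕜,
        ‖(star ψ ⬝ᵥ A *ᵥ ψ) - (star (P *ᵥ ψ) ⬝ᵥ A *ᵥ (P *ᵥ ψ))‖ ≤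
          ε * RCLike.re (star ψ ⬝ᵥ ψ) := by
  classical
  let P := spectralProjection A (Set.Ioi ε)
  have hP : IsStarProjection P := isStarProjection_spectralProjection A (Set.Ioi ε)
  have hPP : P * P = P := hP.isIdempotentElem
  have hrank : (P.rank : ℝ) ≤ RCLike.re A.trace / ε :=
    (le_div_iff₀' hε).mpr (mul_rank_spectralProjection_Ioi_le hA.nonneg ε)
  refine ⟨P.mulVecLin.range, P, hrank, hP.isSelfAdjoint, hPP, fun v ↦ ⟨v, rfl⟩, ?_, fun ψ ↦ ?_⟩
  · rintro _ ⟨w, rfl⟩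
    rw [mulVecLin_apply, mulVec_mulVec, hPP]
  · rw [dotProduct_mulVec_sub_conj_mulVec hP.isSelfAdjoint]
    exact norm_dotProduct_mulVec_le (sub_conj_spectralProjection_nonneg hA.nonneg _)
      (sub_conj_spectralProjection_Ioi_le hA.isHermitian hε.le) ψ

/-- For every `d × d` density matrix `ρ` and `ε ∈ (0,1]` there is a linear
subspace `S` of `ℂ^d` of dimension at most `4/ε²` such that, with `P` the orthogonal projection
onto `S` (a Hermitian idempotent whose range lies in `S` and which fixes `S` pointwise), every
unit vector `ψ` satisfies `|⟨ψ, ρ ψ⟩ - ⟨P ψ, ρ (P ψ)⟩| ≤ ε`. -/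
theorem stmt_3 {d : ℕ} (ρ : Matrix (Fin d) (Fin d) ℂ)
    (hρ : ρ.PosSemidef) (hρtr : ρ.trace = 1)
    (ε : ℝ) (hε0 : 0 < ε) (hε1 : ε ≤ 1) :
    ∃ (S : Submodule ℂ (Fin d → ℂ)) (P : Matrix (Fin d) (Fin d) ℂ),
      (Module.finrank ℂ S : ℝ) ≤ 4 / ε ^ 2 ∧
      P.IsHermitian ∧ P * P = P ∧
      (∀ v, P *ᵥ v ∈ S) ∧ (∀ v ∈ S, P *ᵥ v = v) ∧
      ∀ ψ : Fin d → ℂ, star ψ ⬝ᵥ ψ = 1 →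
        ‖(star ψ ⬝ᵥ ρ *ᵥ ψ) - (star (P *ᵥ ψ) ⬝ᵥ ρ *ᵥ (P *ᵥ ψ))‖ ≤ ε := by
  obtain ⟨S, P, hdim, hP, hPP, hPS, hSP, herr⟩ := stmt_3_general hρ hε0
  have hbound : RCLike.re ρ.trace / ε ≤ 4 / ε ^ 2 := by
    rw [hρtr, RCLike.one_re, div_le_div_iff₀ hε0 (by positivity)]
    nlinarith
  exact ⟨S, P, hdim.trans hbound, hP, hPP, hPS, hSP, fun ψ hψ ↦ by simpa [hψ] using herr ψ⟩
end

section
/- Let ρ be a d×d density matrix, let φ_1, …, φ_k ∈ ℂ^d be orthonormal vectors, and let m ≥ k + 1. Then there exists an m×m density matrix ρ̂ such that ρ̂_{ij} = ⟨φ_i, ρ φ_j⟩ for all 1 ≤ i, j ≤ k. Consequently, for every α ∈ ℂ^k, setting ψ = Σ_{i=1}^k α_i φ_i and α' ∈ ℂ^m the extension of α by zeros, one has ⟨ψ, ρψ⟩ = ⟨α', ρ̂ α'⟩. -/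
open Matrix
open scoped ComplexOrder

/-!
With `B` the `d × k` matrix of columns `φ i`, the compression `Bᴴ * ρ * B` is positive semidefinite,
and Bessel's inequality `B * Bᴴ ≤ 1` gives `tr (Bᴴ * ρ * B) = tr (ρ * (B * Bᴴ)) ≤ tr ρ`. Since
`m > k`, the missing trace can be placed on a diagonal entry outside the `k × k` block, where it is
invisible to vectors supported on the first `k` coordinates.
-/

section StarRing

variable {R n ι : Type*} [NonUnitalSemiring R] [StarRing R] [Fintype ι]

theorem star_mulVec_dotProduct_mulVec_mulVec [Fintype n] (A : Matrix n n R) (B : Matrix n ι R)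
    (v : ι → R) :
    star (B *ᵥ v) ⬝ᵥ A *ᵥ (B *ᵥ v) = star v ⬝ᵥ (Bᴴ * A * B) *ᵥ v := by
  rw [star_mulVec, ← dotProduct_mulVec, mulVec_mulVec, mulVec_mulVec, Matrix.mul_assoc]

theorem sum_vecMulVec_star_eq_mul_conjTranspose (φ : ι → n → R) :
    ∑ i, vecMulVec (φ i) (star (φ i)) = (of φ)ᵀ * (of φ)ᵀᴴ := by
  ext x y
  simp [Matrix.sum_apply, vecMulVec_apply, mul_apply]

end StarRing

section InclusionMatrix

variable {R ι κ : Type*} [DecidableEq κ]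

/-- The matrix of the coordinate inclusion `R^ι → R^κ` along `e : ι ↪ κ`, whose `i`-th column is the
basis vector at `e i`. Conjugation by it extends an `ι × ι` matrix by zeros to a `κ × κ` matrix. -/
def inclusionMatrix (R : Type*) [Zero R] [One R] (e : ι ↪ κ) : Matrix κ ι R :=
  (1 : Matrix κ κ R).submatrix id e

theorem conjTranspose_inclusionMatrix_mul_mul [Semiring R] [StarRing R] [Fintype κ] (e : ι ↪ κ)
    (N : Matrix κ κ R) :
    (inclusionMatrix R e)ᴴ * N * inclusionMatrix R e = N.submatrix e e := by
  ext i j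
  simp [inclusionMatrix, mul_apply, one_apply]

theorem conjTranspose_inclusionMatrix_mul_self [Semiring R] [StarRing R] [Fintype κ]
    [DecidableEq ι] (e : ι ↪ κ) : (inclusionMatrix R e)ᴴ * inclusionMatrix R e = 1 := by
  simpa using conjTranspose_inclusionMatrix_mul_mul e (1 : Matrix κ κ R)

theorem inclusionMatrix_mulVec [NonAssocSemiring R] [Fintype ι] (e : ι ↪ κ) (v : ι → R) :
    inclusionMatrix R e *ᵥ v = Function.extend e v 0 := by
  classical
  ext a
  by_cases ha : ∃ i, e i = a
  · obtain ⟨i, rfl⟩ := ha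
    simp [inclusionMatrix, mulVec, dotProduct, one_apply, e.injective.extend_apply,
      e.injective.eq_iff]
  · rw [Function.extend_apply' _ _ _ ha]
    have ha' : ∀ i, a ≠ e i := fun i hi => ha ⟨i, hi.symm⟩
    simp [inclusionMatrix, mulVec, dotProduct, one_apply, ha']

end InclusionMatrix

section Padding

variable {R ι κ : Type*} [Fintype ι] [Fintype κ]

theorem star_extend_dotProduct_mulVec_extend [Semiring R] [StarRing R] (e : ι ↪ κ)
    (N : Matrix κ κ R) (v : ι → R) :
    star (Function.extend e v 0) ⬝ᵥ N *ᵥ Function.extend e v 0 =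
      star v ⬝ᵥ N.submatrix e e *ᵥ v := by
  classical
  rw [← inclusionMatrix_mulVec, star_mulVec_dotProduct_mulVec_mulVec,
    conjTranspose_inclusionMatrix_mul_mul]

theorem exists_posSemidef_submatrix_eq_trace_eq [CommRing R] [PartialOrder R] [StarRing R]
    [StarOrderedRing R] (e : ι ↪ κ) (he : ¬ Function.Surjective e)
    {M : Matrix ι ι R} (hM : M.PosSemidef) {t : R} (ht : M.trace ≤ t) :
    ∃ N : Matrix κ κ R, N.PosSemidef ∧ N.trace = t ∧ N.submatrix e e = M := by
  classical
  obtain ⟨q, hq⟩ : ∃ q, ∀ i, e i ≠ q := by simpa [Function.Surjective] using he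
  let E := inclusionMatrix R e
  have hE : Eᴴ * E = 1 := conjTranspose_inclusionMatrix_mul_self e
  have trace_conj : (E * M * Eᴴ).trace = M.trace := by
    rw [trace_mul_comm, ← Matrix.mul_assoc, hE, Matrix.one_mul]
  have submatrix_conj : (E * M * Eᴴ).submatrix e e = M := by
    rw [← conjTranspose_inclusionMatrix_mul_mul]
    calc Eᴴ * (E * M * Eᴴ) * E = (Eᴴ * E) * M * (Eᴴ * E) := by simp only [Matrix.mul_assoc]
      _ = M := by rw [hE, Matrix.one_mul, Matrix.mul_one]
  have submatrix_diagonal : (diagonal (Pi.single q (t - M.trace))).submatrix e e = 0 := by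
    ext i j
    simp [diagonal_apply, hq]
  refine ⟨E * M * Eᴴ + diagonal (Pi.single q (t - M.trace)), ?_, ?_, ?_⟩
  · exact (hM.mul_mul_conjTranspose_same E).add
      (PosSemidef.diagonal (Pi.single_nonneg.2 (sub_nonneg.2 ht)))
  · simp [trace_conj]
  · rw [submatrix_add, Pi.add_apply, Pi.add_apply, submatrix_conj, submatrix_diagonal, add_zero]

end Padding

section RCLike

open scoped MatrixOrder

variable {𝕜 n ι κ : Type*} [RCLike 𝕜] [Fintype n] [Fintype ι]

theorem trace_mul_nonneg_of_posSemidef {A P : Matrix n n 𝕜} (hA : A.PosSemidef)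
    (hP : P.PosSemidef) : 0 ≤ (A * P).trace := by
  classical
  obtain ⟨C, rfl⟩ := CStarAlgebra.nonneg_iff_eq_star_mul_self.mp hP.nonneg
  rw [star_eq_conjTranspose, ← Matrix.mul_assoc, trace_mul_comm, ← Matrix.mul_assoc]
  exact (hA.mul_mul_conjTranspose_same C).trace_nonneg

variable [DecidableEq n]

theorem trace_conjTranspose_mul_mul_le {A : Matrix n n 𝕜} (hA : A.PosSemidef)
    {B : Matrix n ι 𝕜} (hB : B * Bᴴ ≤ 1) : (Bᴴ * A * B).trace ≤ A.trace := by
  have h : 0 ≤ (A * (1 - B * Bᴴ)).trace := trace_mul_nonneg_of_posSemidef hA (le_iff.mp hB)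
  rwa [Matrix.mul_sub, Matrix.mul_one, trace_sub, sub_nonneg, ← Matrix.mul_assoc,
    trace_mul_comm, ← Matrix.mul_assoc] at h

theorem mul_conjTranspose_le_one_of_conjTranspose_mul_eq_one [DecidableEq ι] {B : Matrix n ι 𝕜}
    (hB : Bᴴ * B = 1) : B * Bᴴ ≤ 1 := by
  have isStarProjection : IsStarProjection (B * Bᴴ) :=
    { isIdempotentElem := by
        rw [IsIdempotentElem, Matrix.mul_assoc, ← Matrix.mul_assoc Bᴴ, hB, Matrix.one_mul]
      isSelfAdjoint := isHermitian_mul_conjTranspose_self B }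
  exact isStarProjection.le_one

theorem sum_vecMulVec_star_le_one_of_orthonormal [DecidableEq ι] {φ : ι → n → 𝕜}
    (hφ : ∀ i j, star (φ i) ⬝ᵥ φ j = if i = j then 1 else 0) :
    ∑ i, vecMulVec (φ i) (star (φ i)) ≤ 1 := by
  rw [sum_vecMulVec_star_eq_mul_conjTranspose]
  refine mul_conjTranspose_le_one_of_conjTranspose_mul_eq_one ?_
  ext i j
  exact (hφ i j).trans one_apply.symm

theorem stmt_4_general [Fintype κ] {ρ : Matrix n n 𝕜} (hρ : ρ.PosSemidef) {φ : ι → n → 𝕜}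
    (hφ : ∑ i, vecMulVec (φ i) (star (φ i)) ≤ 1) (e : ι ↪ κ) (he : ¬ Function.Surjective e) :
    ∃ ρhat : Matrix κ κ 𝕜, ρhat.PosSemidef ∧ ρhat.trace = ρ.trace ∧
      (∀ i j, ρhat (e i) (e j) = star (φ i) ⬝ᵥ ρ *ᵥ φ j) ∧
      ∀ α : ι → 𝕜, star (∑ i, α i • φ i) ⬝ᵥ ρ *ᵥ (∑ i, α i • φ i) =
        star (Function.extend e α 0) ⬝ᵥ ρhat *ᵥ Function.extend e α 0 := by
  let B : Matrix n ι 𝕜 := (of φ)ᵀ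
  have hB : B * Bᴴ ≤ 1 := sum_vecMulVec_star_eq_mul_conjTranspose φ ▸ hφ
  obtain ⟨ρhat, hpos, htrace, hsub⟩ := exists_posSemidef_submatrix_eq_trace_eq e he
    (hρ.conjTranspose_mul_mul_same B) (trace_conjTranspose_mul_mul_le hρ hB)
  refine ⟨ρhat, hpos, htrace, fun i j => ?_, fun α => ?_⟩
  · calc ρhat (e i) (e j) = (Bᴴ * ρ * B) i j := congr_fun₂ hsub i j
      _ = star (φ i) ⬝ᵥ ρ *ᵥ φ j := by rw [Matrix.mul_assoc]; rfl
  · have hψ : ∑ i, α i • φ i = B *ᵥ α := by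
      ext x
      simp [mulVec_eq_sum, B]
    rw [hψ, star_mulVec_dotProduct_mulVec_mulVec, star_extend_dotProduct_mulVec_extend, hsub]

end RCLike

theorem extend_castLE_eq_dite {R : Type*} [Zero R] {k m : ℕ} (h : k ≤ m) (v : Fin k → R) :
    Function.extend (Fin.castLE h) v 0 =
      fun i : Fin m => if hi : (i : ℕ) < k then v ⟨i, hi⟩ else 0 := by
  ext i
  split_ifs with hi
  · exact (Fin.castLE_injective h).extend_apply v 0 ⟨i, hi⟩
  · refine Function.extend_apply' _ _ _ ?_
    rintro ⟨j, rfl⟩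
    exact hi j.isLt

theorem not_surjective_castLE {k m : ℕ} (h : k < m) :
    ¬ Function.Surjective (Fin.castLE h.le) := fun hsurj =>
  h.not_ge (by simpa using Fintype.card_le_of_surjective _ hsurj)

/-- Let `ρ` be a `d × d` density matrix, `φ 1, …, φ k` orthonormal vectors in
`ℂ^d`, and `m ≥ k + 1`.  Then there is an `m × m` density matrix `ρ̂` whose top-left `k × k`
block consists of the entries `⟨φ i, ρ (φ j)⟩`; consequently, for every `α ∈ ℂ^k`, with
`ψ = ∑ i, α i • φ i` and `α'` the extension of `α` by zeros to `ℂ^m`, one has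
`⟨ψ, ρ ψ⟩ = ⟨α', ρ̂ α'⟩`. -/
theorem stmt_4 {d k m : ℕ} (ρ : Matrix (Fin d) (Fin d) ℂ)
    (hρ : ρ.PosSemidef) (hρtr : ρ.trace = 1)
    (φ : Fin k → (Fin d → ℂ))
    (hortho : ∀ i j : Fin k, star (φ i) ⬝ᵥ φ j = if i = j then 1 else 0)
    (hm : k + 1 ≤ m) :
    ∃ ρhat : Matrix (Fin m) (Fin m) ℂ, ρhat.PosSemidef ∧ ρhat.trace = 1 ∧
      (∀ i j : Fin k,
        ρhat (Fin.castLE (Nat.le_of_succ_le hm) i) (Fin.castLE (Nat.le_of_succ_le hm) j) =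
          star (φ i) ⬝ᵥ ρ *ᵥ φ j) ∧
      ∀ α : Fin k → ℂ,
        star (∑ i, α i • φ i) ⬝ᵥ ρ *ᵥ (∑ i, α i • φ i) =
          star (fun i : Fin m => if h : (i : ℕ) < k then α ⟨(i : ℕ), h⟩ else 0) ⬝ᵥ
            ρhat *ᵥ (fun i : Fin m => if h : (i : ℕ) < k then α ⟨(i : ℕ), h⟩ else 0) := by
  simpa only [hρtr, Fin.castLEEmb_apply, Fin.coe_castLEEmb, extend_castLE_eq_dite] using
    stmt_4_general hρ (sum_vecMulVec_star_le_one_of_orthonormal hortho)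
      (Fin.castLEEmb (Nat.le_of_succ_le hm)) (not_surjective_castLE hm)
end

section
/- Let o be a real-valued, square-integrable random variable with mean μ = E[o] satisfying μ ∈ [−1, 1], and let T ≥ 1. Define the truncation s = sign(o)·min(|o|, T). Then |E[o] − E[s]| ≤ √(E[(o−μ)²]·Pr[o−μ > T−1]) + √(E[(o−μ)²]·Pr[o−μ < −(T−1)]) + (T−1)·Pr[|o−μ| > T−1]. -/
open MeasureTheory

/-!
Clamping `x` to `[a, b]` removes `(x - b)⁺` above and adds `(a - x)⁺` below. For `c ∈ [a, b]` both
excesses are at most `|x - c|`, and they vanish off `{b < x}` and `{x < a}` respectively, so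
Cauchy–Schwarz against the indicators of these two events bounds their expectations.
Finally, if `|c| ≤ r`, the event `T < X` forces `T - r < X - c`.
-/

lemma sign_mul_min_abs_eq_max_min {T : ℝ} (hT : 0 ≤ T) (x : ℝ) :
    Real.sign x * min |x| T = max (-T) (min x T) := by
  rcases lt_trichotomy x 0 with hx | rfl | hx
  · rw [Real.sign_of_neg hx, abs_of_neg hx, neg_one_mul, ← max_neg_neg, neg_neg, max_comm,
      min_eq_left (hx.le.trans hT)]
  · simp [hT]
  · rw [Real.sign_of_pos hx, abs_of_pos hx, one_mul,
      max_eq_right ((neg_nonpos.2 hT).trans (le_min hx.le hT))]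

lemma sub_max_min_eq_posPart_sub_posPart {α : Type*} [AddCommGroup α] [LinearOrder α]
    [IsOrderedAddMonoid α] {a b : α} (hab : a ≤ b) (x : α) :
    x - max a (min x b) = (x - b)⁺ - (a - x)⁺ := by
  rcases le_total x b with hxb | hbx
  · rw [min_eq_left hxb, sup_eq_add_posPart_sub, posPart_eq_zero.2 (sub_nonpos.2 hxb),
      sub_add_cancel_left, zero_sub]
  · rw [min_eq_right hbx, max_eq_right hab, posPart_eq_zero.2 (sub_nonpos.2 (hab.trans hbx)),
      posPart_of_nonneg (sub_nonneg.2 hbx), sub_zero]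

lemma setIntegral_norm_le_sqrt_integral_sq_mul_measureReal {Ω E : Type*} [MeasurableSpace Ω]
    [NormedAddCommGroup E] {μ : Measure Ω} {f : Ω → E} (hf : MemLp f 2 μ) {A : Set Ω}
    (hA : μ A ≠ ⊤) :
    ∫ ω in A, ‖f ω‖ ∂μ ≤ √((∫ ω, ‖f ω‖ ^ 2 ∂μ) * μ.real A) := by
  have : IsFiniteMeasure (μ.restrict A) := isFiniteMeasure_restrict.2 hA
  have cauchy_schwarz : ∫ ω in A, ‖f ω‖ ∂μ ≤ √(∫ ω in A, ‖f ω‖ ^ 2 ∂μ) * √(μ.real A) := by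
    simpa [Real.sqrt_eq_rpow] using
      integral_mul_norm_le_Lp_mul_Lq (μ := μ.restrict A) Real.HolderConjugate.two_two
        (f := fun ω => ‖f ω‖) (g := fun _ => (1 : ℝ))
        (by simpa using (hf.restrict A).norm) (memLp_const _)
  calc ∫ ω in A, ‖f ω‖ ∂μ
      ≤ √(∫ ω in A, ‖f ω‖ ^ 2 ∂μ) * √(μ.real A) := cauchy_schwarz
    _ ≤ √(∫ ω, ‖f ω‖ ^ 2 ∂μ) * √(μ.real A) := by
        gcongr ?_ * _
        exact Real.sqrt_le_sqrt <|
          setIntegral_le_integral hf.norm.integrable_sq (ae_of_all _ fun _ => sq_nonneg _)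
    _ = √((∫ ω, ‖f ω‖ ^ 2 ∂μ) * μ.real A) := (Real.sqrt_mul' _ measureReal_nonneg).symm

section Truncation

variable {Ω : Type*} [MeasurableSpace Ω] {μ : Measure Ω} [IsFiniteMeasure μ] {X : Ω → ℝ}
  {a b c : ℝ}

lemma integral_posPart_sub_const_le (hX : MemLp X 2 μ) (hcb : c ≤ b) :
    ∫ ω, (X ω - b)⁺ ∂μ ≤ √((∫ ω, (X ω - c) ^ 2 ∂μ) * μ.real {ω | b < X ω}) := by
  have hXc : MemLp (fun ω => X ω - c) 2 μ := hX.sub (memLp_const c)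
  have hXb : Integrable (fun ω => X ω - b) μ :=
    (hX.integrable one_le_two).sub (integrable_const b)
  have excess_le (ω : Ω) : (X ω - b)⁺ ≤ |X ω - c| :=
    (posPart_mono (sub_le_sub_left hcb _)).trans (sup_le (le_abs_self _) (abs_nonneg _))
  calc ∫ ω, (X ω - b)⁺ ∂μ
      = ∫ ω in {ω | b < X ω}, (X ω - b)⁺ ∂μ :=
        (setIntegral_eq_integral_of_forall_compl_eq_zero fun ω (hω : ¬b < X ω) =>
          posPart_eq_zero.2 (sub_nonpos.2 (not_lt.1 hω))).symm
    _ ≤ ∫ ω in {ω | b < X ω}, |X ω - c| ∂μ :=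
        integral_mono hXb.pos_part.integrableOn (hXc.integrable one_le_two).abs.integrableOn
          excess_le
    _ ≤ √((∫ ω, (X ω - c) ^ 2 ∂μ) * μ.real {ω | b < X ω}) := by
        simpa only [Real.norm_eq_abs, sq_abs] using
          setIntegral_norm_le_sqrt_integral_sq_mul_measureReal hXc
            (measure_ne_top μ {ω | b < X ω})

lemma integral_posPart_const_sub_le (hX : MemLp X 2 μ) (hac : a ≤ c) :
    ∫ ω, (a - X ω)⁺ ∂μ ≤ √((∫ ω, (X ω - c) ^ 2 ∂μ) * μ.real {ω | X ω < a}) := by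
  have h := integral_posPart_sub_const_le hX.neg (neg_le_neg hac)
  simpa only [Pi.neg_apply, neg_sub_neg, neg_lt_neg_iff, sub_sq_comm c] using h

lemma abs_integral_sub_integral_max_min_le (hX : MemLp X 2 μ) (hac : a ≤ c) (hcb : c ≤ b) :
    |(∫ ω, X ω ∂μ) - ∫ ω, max a (min (X ω) b) ∂μ| ≤
      √((∫ ω, (X ω - c) ^ 2 ∂μ) * μ.real {ω | b < X ω}) +
        √((∫ ω, (X ω - c) ^ 2 ∂μ) * μ.real {ω | X ω < a}) := by
  have hXi : Integrable X μ := hX.integrable one_le_two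
  have hclamp : Integrable (fun ω => max a (min (X ω) b)) μ :=
    (integrable_const a).sup (hXi.inf (integrable_const b))
  have hupper : Integrable (fun ω => (X ω - b)⁺) μ := (hXi.sub (integrable_const b)).pos_part
  have hlower : Integrable (fun ω => (a - X ω)⁺) μ := ((integrable_const a).sub hXi).pos_part
  calc |(∫ ω, X ω ∂μ) - ∫ ω, max a (min (X ω) b) ∂μ|
      = |(∫ ω, (X ω - b)⁺ ∂μ) - ∫ ω, (a - X ω)⁺ ∂μ| := by
        simp only [← integral_sub hXi hclamp, ← integral_sub hupper hlower,
          sub_max_min_eq_posPart_sub_posPart (hac.trans hcb)]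
    _ ≤ |∫ ω, (X ω - b)⁺ ∂μ| + |∫ ω, (a - X ω)⁺ ∂μ| := abs_sub _ _
    _ = (∫ ω, (X ω - b)⁺ ∂μ) + ∫ ω, (a - X ω)⁺ ∂μ := by
        rw [abs_of_nonneg (integral_nonneg fun _ => posPart_nonneg _),
          abs_of_nonneg (integral_nonneg fun _ => posPart_nonneg _)]
    _ ≤ √((∫ ω, (X ω - c) ^ 2 ∂μ) * μ.real {ω | b < X ω}) +
          √((∫ ω, (X ω - c) ^ 2 ∂μ) * μ.real {ω | X ω < a}) :=
        add_le_add (integral_posPart_sub_const_le hX hcb) (integral_posPart_const_sub_le hX hac)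

theorem stmt_7_general (hX : MemLp X 2 μ) {r T : ℝ} (hcr : |c| ≤ r) (hcT : |c| ≤ T) :
    |(∫ ω, X ω ∂μ) - ∫ ω, Real.sign (X ω) * min |X ω| T ∂μ| ≤
      √((∫ ω, (X ω - c) ^ 2 ∂μ) * μ.real {ω | T - r < X ω - c}) +
        √((∫ ω, (X ω - c) ^ 2 ∂μ) * μ.real {ω | X ω - c < -(T - r)}) := by
  obtain ⟨hrc, hcr⟩ := abs_le.1 hcr
  have hupper (ω : Ω) (hω : T < X ω) : T - r < X ω - c := by linarith
  have hlower (ω : Ω) (hω : X ω < -T) : X ω - c < -(T - r) := by linarith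
  simp only [sign_mul_min_abs_eq_max_min ((abs_nonneg c).trans hcT)]
  refine (abs_integral_sub_integral_max_min_le hX (abs_le.1 hcT).1 (abs_le.1 hcT).2).trans ?_
  gcongr √(_ * ?_) + √(_ * ?_)
  · exact measureReal_mono hupper
  · exact measureReal_mono hlower

end Truncation

/-- **bias of truncation.** Let `o` be a square-integrable real random variable
with mean `μ₀ = E[o] ∈ [-1,1]` and `T ≥ 1`.  With `s = sign(o) · min(|o|, T)` the truncation
of `o` to `[-T, T]`, one has
`|E[o] - E[s]| ≤ √(E[(o-μ₀)²] Pr[o-μ₀ > T-1]) + √(E[(o-μ₀)²] Pr[o-μ₀ < -(T-1)])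
  + (T-1) Pr[|o-μ₀| > T-1]`. -/
theorem stmt_7 {Ω : Type*} [MeasurableSpace Ω] (P : Measure Ω) [IsProbabilityMeasure P]
    (o : Ω → ℝ) (ho : MemLp o 2 P)
    (hμlb : -1 ≤ ∫ ω, o ω ∂P) (hμub : ∫ ω, o ω ∂P ≤ 1)
    (T : ℝ) (hT : 1 ≤ T) :
    |(∫ ω, o ω ∂P) - ∫ ω, Real.sign (o ω) * min |o ω| T ∂P| ≤
      Real.sqrt ((∫ ω, (o ω - ∫ x, o x ∂P) ^ 2 ∂P) *
          (P {ω | T - 1 < o ω - ∫ x, o x ∂P}).toReal) +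
        Real.sqrt ((∫ ω, (o ω - ∫ x, o x ∂P) ^ 2 ∂P) *
          (P {ω | o ω - ∫ x, o x ∂P < -(T - 1)}).toReal) +
        (T - 1) * (P {ω | T - 1 < |o ω - ∫ x, o x ∂P|}).toReal := by
  have hμ : |∫ ω, o ω ∂P| ≤ 1 := abs_le.2 ⟨hμlb, hμub⟩
  exact (stmt_7_general ho hμ (hμ.trans hT)).trans
    (le_add_of_nonneg_right (mul_nonneg (sub_nonneg.2 hT) ENNReal.toReal_nonneg))
end

section
/- Let ρ be a d×d density matrix, ε ∈ (0,1], and B > 0. Suppose O_1, …, O_m are d×d Hermitian matrices, where each O_t = Σ_{j∈J_t} w_{t,j} |ψ^{t,j}⟩⟨ψ^{t,j}| for a finite index set J_t, orthonormal vectors {ψ^{t,j}}_{j∈J_t} ⊆ ℂ^d, and real weights satisfying |w_{t,j}| > ε/2 for all j ∈ J_t and Σ_{j∈J_t} w_{t,j}² ≤ B. Let S_t be the linear span of all ψ^{r,j} with r < t, j ∈ J_r, and let P_t be the orthogonal projection onto S_t. If for every t ∈ {1, …, m} one has |tr(P_t O_t P_t ρ) − tr(O_t ρ)| > (3/16)ε,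 then m ≤ 4096 B²/(9 ε⁴). -/
open Matrix
open scoped ComplexOrder

/-!
Write `ρ = A Aᴴ` with Frobenius norm `‖A‖² = tr ρ = 1`, and let `P ≤ Q` be the projections before
and after a round with observable `O = Q O = O Q`. From
`O - P O P = (Q - P) O + P O (Q - P)`, Cauchy–Schwarz bounds the deviation by
`2 ‖O‖ ‖(Q - P) A‖`, and by Pythagoras `‖(Q - P) A‖² = ‖Q A‖² - ‖P A‖²`. The potential `‖P A‖²`
stays in `[0, 1]`, so the squared deviations telescope to a total of at most `4 B`. With all
deviations above `3 ε / 16` this gives `m ≤ 1024 B / (9 ε²)`; a round with a nonzero deviation has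
an eigenvalue of modulus above `ε / 2`, hence `ε² ≤ 4 B`, which turns this into the stated bound.
-/

theorem sq_le_sum_sq_of_forall_le_abs {ι : Type*} {J : Finset ι} (hJ : J.Nonempty) {w : ι → ℝ}
    {a : ℝ} (ha : 0 ≤ a) (hw : ∀ j ∈ J, a ≤ |w j|) : a ^ 2 ≤ ∑ j ∈ J, w j ^ 2 := by
  obtain ⟨j, hj⟩ := hJ
  calc a ^ 2 ≤ w j ^ 2 := sq_abs (w j) ▸ pow_le_pow_left₀ ha (hw j hj) 2
    _ ≤ ∑ j ∈ J, w j ^ 2 := Finset.single_le_sum (fun i _ => sq_nonneg (w i)) hj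

theorem sum_succ_sub_castSucc {G : Type*} [AddCommGroup G] {m : ℕ} (f : Fin (m + 1) → G) :
    ∑ t : Fin m, (f t.succ - f t.castSucc) = f (Fin.last m) - f 0 := by
  rw [Finset.sum_sub_distrib, sub_eq_sub_iff_add_eq_add, add_comm, ← Fin.sum_univ_succ,
    Fin.sum_univ_castSucc, add_comm]

theorem snoc_one_succ_mul_eq {M : Type*} [MulOneClass M] {m : ℕ} {P : Fin m → M} {x : M}
    {t : Fin m} (h : ∀ s, t < s → P s * x = x) : Fin.snoc (α := fun _ => M) P 1 t.succ * x = x := by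
  obtain ⟨s, hs⟩ | hlast := t.succ.eq_castSucc_or_eq_last
  · rw [hs, Fin.snoc_castSucc]
    exact h s (Fin.castSucc_lt_castSucc_iff.mp (hs ▸ Fin.castSucc_lt_succ))
  · rw [hlast, Fin.snoc_last, one_mul]

theorem mul_eq_right_of_mulVec_mem {R l n : Type*} [Semiring R] [Fintype l] [Fintype n]
    {S : Submodule R (n → R)} {Q : Matrix n n R} {M : Matrix n l R} (hM : ∀ v, M *ᵥ v ∈ S)
    (hQ : ∀ v ∈ S, Q *ᵥ v = v) : Q * M = M := by
  classical
  refine ext_of_mulVec_single fun i => ?_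
  rw [← mulVec_mulVec, hQ _ (hM _)]

theorem isHermitian_sum_smul_vecMulVec_star {𝕜 n ι : Type*} [RCLike 𝕜] (J : Finset ι)
    (ψ : ι → n → 𝕜) (w : ι → ℝ) :
    (∑ j ∈ J, (w j : 𝕜) • vecMulVec (ψ j) (star (ψ j))).IsHermitian :=
  isSelfAdjoint_sum J fun j _ => by
    simp [isSelfAdjoint_iff, star_eq_conjTranspose, conjTranspose_vecMulVec]

open scoped MatrixOrder Matrix.Norms.L2Operator in
theorem exists_eq_mul_conjTranspose_of_posSemidef {𝕜 n : Type*} [RCLike 𝕜] [Fintype n]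
    {ρ : Matrix n n 𝕜} (hρ : ρ.PosSemidef) :
    ∃ A : Matrix n n 𝕜, ρ = A * Aᴴ := by
  classical exact CStarAlgebra.nonneg_iff_eq_mul_star_self.mp hρ.nonneg

section FrobeniusNorm

variable {𝕜 l n k : Type*} [RCLike 𝕜] [Fintype l] [Fintype n] [Fintype k]

open scoped Matrix.Norms.Frobenius

theorem frobenius_norm_eq_norm_toLp_vec (A : Matrix l n 𝕜) : ‖A‖ = ‖WithLp.toLp 2 A.vec‖ := by
  rw [frobenius_norm_def, EuclideanSpace.norm_eq, Real.sqrt_eq_rpow, Fintype.sum_prod_type,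
    Finset.sum_comm]
  simp [vec]

theorem trace_conjTranspose_mul_eq_inner (X Y : Matrix l n 𝕜) :
    (Xᴴ * Y).trace = inner 𝕜 (WithLp.toLp 2 X.vec) (WithLp.toLp 2 Y.vec) := by
  rw [EuclideanSpace.inner_toLp_toLp, dotProduct_comm, star_vec_dotProduct_vec]

theorem norm_trace_conjTranspose_mul_le (X Y : Matrix l n 𝕜) :
    ‖(Xᴴ * Y).trace‖ ≤ ‖X‖ * ‖Y‖ := by
  simpa only [trace_conjTranspose_mul_eq_inner, frobenius_norm_eq_norm_toLp_vec]
    using norm_inner_le_norm _ _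

theorem trace_conjTranspose_mul_self_eq_norm_sq (X : Matrix l n 𝕜) :
    (Xᴴ * X).trace = (‖X‖ : 𝕜) ^ 2 := by
  rw [trace_conjTranspose_mul_eq_inner, inner_self_eq_norm_sq_to_K, frobenius_norm_eq_norm_toLp_vec]

theorem frobenius_norm_sq_sum_smul_vecMulVec {ι : Type*} [DecidableEq ι] (J : Finset ι)
    (ψ : ι → n → 𝕜) (w : ι → ℝ)
    (hψ : ∀ i ∈ J, ∀ j ∈ J, star (ψ i) ⬝ᵥ ψ j = if i = j then 1 else 0) :
    ‖∑ j ∈ J, (w j : 𝕜) • vecMulVec (ψ j) (star (ψ j))‖ ^ 2 = ∑ j ∈ J, w j ^ 2 := by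
  have trace_mul : ∀ i ∈ J, ∀ j ∈ J,
      (((w i : 𝕜) • vecMulVec (ψ i) (star (ψ i))) *
        ((w j : 𝕜) • vecMulVec (ψ j) (star (ψ j)))).trace = if i = j then (w i : 𝕜) ^ 2 else 0 := by
    intro i hi j hj
    rw [Matrix.smul_mul, Matrix.mul_smul, vecMulVec_mul_vecMulVec, hψ i hi j hj]
    split_ifs with hij
    · subst hij
      simp [trace_vecMulVec, dotProduct_comm (ψ i), hψ i hi i hi, sq, RCLike.real_smul_eq_coe_mul]
    · simp
  apply RCLike.ofReal_injective (K := 𝕜)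
  push_cast
  rw [← trace_conjTranspose_mul_self_eq_norm_sq, (isHermitian_sum_smul_vecMulVec_star J ψ w).eq,
    Finset.sum_mul_sum, trace_sum]
  refine Finset.sum_congr rfl fun i hi => ?_
  rw [trace_sum, Finset.sum_congr rfl (trace_mul i hi), Finset.sum_ite_eq, if_pos hi]

section StarProjection

variable {P Q O : Matrix n n 𝕜}

theorem norm_sq_mul_eq_trace_of_isStarProjection (hP : IsStarProjection P) (A : Matrix n k 𝕜) :
    ((‖P * A‖ ^ 2 : ℝ) : 𝕜) = (Aᴴ * (P * A)).trace := by
  rw [RCLike.ofReal_pow, ← trace_conjTranspose_mul_self_eq_norm_sq, conjTranspose_mul,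
    Matrix.mul_assoc, ← Matrix.mul_assoc Pᴴ, ← star_eq_conjTranspose P, hP.isSelfAdjoint.star_eq,
    hP.isIdempotentElem.eq]

theorem norm_sq_sub_mul_of_isStarProjection (hP : IsStarProjection P) (hQ : IsStarProjection Q)
    (hQP : Q * P = P) (A : Matrix n k 𝕜) :
    ‖(Q - P) * A‖ ^ 2 = ‖Q * A‖ ^ 2 - ‖P * A‖ ^ 2 := by
  apply RCLike.ofReal_injective (K := 𝕜)
  rw [RCLike.ofReal_sub, norm_sq_mul_eq_trace_of_isStarProjection (hP.sub_of_mul_eq_right hQ hQP),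
    norm_sq_mul_eq_trace_of_isStarProjection hQ, norm_sq_mul_eq_trace_of_isStarProjection hP,
    ← trace_sub, Matrix.sub_mul, Matrix.mul_sub]

theorem norm_mul_le_of_isStarProjection (hP : IsStarProjection P) (A : Matrix n k 𝕜) :
    ‖P * A‖ ≤ ‖A‖ := by
  classical
  have pythagoras := norm_sq_sub_mul_of_isStarProjection hP (.one _) (one_mul P) A
  rw [Matrix.one_mul] at pythagoras
  exact le_of_sq_le_sq (sub_nonneg.mp (pythagoras ▸ sq_nonneg _)) (norm_nonneg _)

theorem norm_trace_compression_sub_le (hP : IsStarProjection P) (hQ : IsStarProjection Q)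
    (hQP : Q * P = P) (hO : O.IsHermitian) (hQO : Q * O = O) (A : Matrix n k 𝕜) :
    ‖(P * O * P * (A * Aᴴ)).trace - (O * (A * Aᴴ)).trace‖ ≤
      2 * ‖O‖ * ‖A‖ * ‖(Q - P) * A‖ := by
  have hPH : Pᴴ = P := hP.isSelfAdjoint
  have hRH : (Q - P)ᴴ = Q - P := (hP.sub_of_mul_eq_right hQ hQP).isSelfAdjoint
  have hOQ : O * Q = O := by
    simpa only [conjTranspose_mul, hO.eq, show Qᴴ = Q from hQ.isSelfAdjoint]
      using congrArg conjTranspose hQO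
  have decomposition : P * O * P - O = -((Q - P) * O + P * O * (Q - P)) := by
    rw [Matrix.sub_mul, Matrix.mul_sub, hQO, Matrix.mul_assoc P O Q, hOQ]
    abel
  have trace_eq : (P * O * P * (A * Aᴴ)).trace - (O * (A * Aᴴ)).trace =
      -((((Q - P) * A)ᴴ * (O * A)).trace + ((O * (P * A))ᴴ * ((Q - P) * A)).trace) := by
    rw [← trace_sub, ← Matrix.sub_mul, decomposition, Matrix.neg_mul, trace_neg,
      ← Matrix.mul_assoc, trace_mul_comm, ← trace_add]
    simp only [conjTranspose_mul, hRH, hO.eq, hPH, Matrix.mul_add, Matrix.add_mul,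
      Matrix.mul_assoc]
  have hOPA : ‖O * (P * A)‖ ≤ ‖O‖ * ‖A‖ := (frobenius_norm_mul _ _).trans <|
    mul_le_mul_of_nonneg_left (norm_mul_le_of_isStarProjection hP A) (norm_nonneg _)
  rw [trace_eq, norm_neg]
  calc _ ≤ ‖(((Q - P) * A)ᴴ * (O * A)).trace‖ + ‖((O * (P * A))ᴴ * ((Q - P) * A)).trace‖ :=
        norm_add_le _ _
    _ ≤ ‖(Q - P) * A‖ * ‖O * A‖ + ‖O * (P * A)‖ * ‖(Q - P) * A‖ :=
        add_le_add (norm_trace_conjTranspose_mul_le _ _) (norm_trace_conjTranspose_mul_le _ _)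
    _ ≤ ‖(Q - P) * A‖ * (‖O‖ * ‖A‖) + ‖O‖ * ‖A‖ * ‖(Q - P) * A‖ := by
        gcongr
        exact frobenius_norm_mul O A
    _ = 2 * ‖O‖ * ‖A‖ * ‖(Q - P) * A‖ := by ring

end StarProjection

section Chain

variable {m : ℕ} {O : Fin m → Matrix n n 𝕜} {B : ℝ}

theorem sum_sq_norm_trace_compression_sub_le_of_chain {Q : Fin (m + 1) → Matrix n n 𝕜}
    (hQ : ∀ t, IsStarProjection (Q t))
    (hQQ : ∀ t : Fin m, Q t.succ * Q t.castSucc = Q t.castSucc)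
    (hO : ∀ t, (O t).IsHermitian) (hQO : ∀ t, Q t.succ * O t = O t)
    (hB : 0 ≤ B) (hOB : ∀ t, ‖O t‖ ^ 2 ≤ B) (A : Matrix n k 𝕜) :
    ∑ t, ‖(Q t.castSucc * O t * Q t.castSucc * (A * Aᴴ)).trace - (O t * (A * Aᴴ)).trace‖ ^ 2 ≤
      4 * B * (‖A‖ ^ 2) ^ 2 := by
  have step (t : Fin m) :
      ‖(Q t.castSucc * O t * Q t.castSucc * (A * Aᴴ)).trace - (O t * (A * Aᴴ)).trace‖ ^ 2 ≤
        4 * B * ‖A‖ ^ 2 * (‖Q t.succ * A‖ ^ 2 - ‖Q t.castSucc * A‖ ^ 2) := by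
    rw [← norm_sq_sub_mul_of_isStarProjection (hQ _) (hQ _) (hQQ t)]
    calc _ ≤ (2 * ‖O t‖ * ‖A‖ * ‖(Q t.succ - Q t.castSucc) * A‖) ^ 2 := by
          gcongr
          exact norm_trace_compression_sub_le (hQ _) (hQ _) (hQQ t) (hO t) (hQO t) A
      _ = 4 * ‖O t‖ ^ 2 * ‖A‖ ^ 2 * ‖(Q t.succ - Q t.castSucc) * A‖ ^ 2 := by ring
      _ ≤ _ := by gcongr; exact hOB t
  calc _ ≤ ∑ t : Fin m, 4 * B * ‖A‖ ^ 2 * (‖Q t.succ * A‖ ^ 2 - ‖Q t.castSucc * A‖ ^ 2) :=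
        Finset.sum_le_sum fun t _ => step t
    _ = 4 * B * ‖A‖ ^ 2 * (‖Q (Fin.last m) * A‖ ^ 2 - ‖Q 0 * A‖ ^ 2) := by
        rw [← Finset.mul_sum, sum_succ_sub_castSucc fun t => ‖Q t * A‖ ^ 2]
    _ ≤ 4 * B * ‖A‖ ^ 2 * ‖A‖ ^ 2 := by
        gcongr
        exact (sub_le_self _ (sq_nonneg _)).trans
          (pow_le_pow_left₀ (norm_nonneg _) (norm_mul_le_of_isStarProjection (hQ _) A) 2)
    _ = 4 * B * (‖A‖ ^ 2) ^ 2 := by ring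

theorem sum_sq_norm_trace_compression_sub_le {P : Fin m → Matrix n n 𝕜}
    (hP : ∀ t, IsStarProjection (P t)) (hPP : ∀ t s, t < s → P s * P t = P t)
    (hO : ∀ t, (O t).IsHermitian) (hPO : ∀ t s, t < s → P s * O t = O t)
    (hB : 0 ≤ B) (hOB : ∀ t, ‖O t‖ ^ 2 ≤ B) (A : Matrix n k 𝕜) :
    ∑ t, ‖(P t * O t * P t * (A * Aᴴ)).trace - (O t * (A * Aᴴ)).trace‖ ^ 2 ≤
      4 * B * (‖A‖ ^ 2) ^ 2 := by
  classical
  -- After the last round any projection dominating the earlier ones will do; take the identity.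
  let Q : Fin (m + 1) → Matrix n n 𝕜 := Fin.snoc P 1
  have hQ_castSucc (t : Fin m) : Q t.castSucc = P t := Fin.snoc_castSucc ..
  have hQ (t) : IsStarProjection (Q t) := by
    cases t using Fin.lastCases with
    | last => simpa only [Q, Fin.snoc_last] using IsStarProjection.one _
    | cast t => exact (hQ_castSucc t).symm ▸ hP t
  simpa only [hQ_castSucc] using sum_sq_norm_trace_compression_sub_le_of_chain hQ
    (fun t => by rw [hQ_castSucc]; exact snoc_one_succ_mul_eq (hPP t)) hO
    (fun t => snoc_one_succ_mul_eq (hPO t)) hB hOB A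

end Chain

theorem stmt_12_general {m : ℕ} {ι : Type*} [DecidableEq ι]
    {ρ : Matrix n n 𝕜} (hρ : ρ.PosSemidef) (hρtr : ρ.trace = 1) {B : ℝ} (hB : 0 ≤ B)
    {J : Fin m → Finset ι} {ψ : Fin m → ι → n → 𝕜} {w : Fin m → ι → ℝ}
    (hortho : ∀ t, ∀ i ∈ J t, ∀ j ∈ J t, star (ψ t i) ⬝ᵥ ψ t j = if i = j then 1 else 0)
    (hwF : ∀ t, ∑ j ∈ J t, w t j ^ 2 ≤ B)
    {O : Fin m → Matrix n n 𝕜}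
    (hO : ∀ t, O t = ∑ j ∈ J t, (w t j : 𝕜) • vecMulVec (ψ t j) (star (ψ t j)))
    {P : Fin m → Matrix n n 𝕜} (hPH : ∀ t, (P t).IsHermitian)
    (hPmem : ∀ t v, P t *ᵥ v ∈
      Submodule.span 𝕜 {x | ∃ r : Fin m, ∃ j ∈ J r, r < t ∧ x = ψ r j})
    (hPfix : ∀ t, ∀ v ∈ Submodule.span 𝕜 {x | ∃ r : Fin m, ∃ j ∈ J r, r < t ∧ x = ψ r j},
      P t *ᵥ v = v) :
    ∑ t, ‖(P t * O t * P t * ρ).trace - (O t * ρ).trace‖ ^ 2 ≤ 4 * B := by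
  obtain ⟨A, rfl⟩ := exists_eq_mul_conjTranspose_of_posSemidef hρ
  have hA : ‖A‖ ^ 2 = 1 := RCLike.ofReal_injective (K := 𝕜) <| by
    rw [RCLike.ofReal_pow, ← trace_conjTranspose_mul_self_eq_norm_sq, trace_mul_comm, hρtr,
      RCLike.ofReal_one]
  have hPP (t s : Fin m) (hts : t ≤ s) : P s * P t = P t := by
    refine mul_eq_right_of_mulVec_mem (fun v => Submodule.span_mono ?_ (hPmem t v)) (hPfix s)
    rintro _ ⟨r, j, hj, hrt, rfl⟩
    exact ⟨r, j, hj, hrt.trans_le hts, rfl⟩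
  have hP (t) : IsStarProjection (P t) := ⟨hPP t t le_rfl, hPH t⟩
  have hPO (t s : Fin m) (hts : t < s) : P s * O t = O t := by
    rw [hO, Finset.mul_sum]
    refine Finset.sum_congr rfl fun j hj => ?_
    rw [Matrix.mul_smul, mul_vecMulVec, hPfix s _ (Submodule.subset_span ⟨t, j, hj, hts, rfl⟩)]
  have hOH (t) : (O t).IsHermitian := hO t ▸ isHermitian_sum_smul_vecMulVec_star ..
  have hOB (t) : ‖O t‖ ^ 2 ≤ B := by
    rw [hO, frobenius_norm_sq_sum_smul_vecMulVec _ _ _ (hortho t)]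
    exact hwF t
  simpa only [hA, one_pow, mul_one] using sum_sq_norm_trace_compression_sub_le
    hP (fun t s hts => hPP t s hts.le) hOH hPO hB hOB A

end FrobeniusNorm

/-- **mistake bound for bounded-Frobenius-norm observables.**
Let `ρ` be a `d × d` density matrix, `ε ∈ (0,1]`, `B > 0`.  Suppose the observables
`O t = ∑_{j ∈ J t} w t j • |ψ t j⟩⟨ψ t j|` (for `t = 1, …, m`) are built from orthonormal
families of eigenvectors with real weights satisfying `|w t j| > ε/2` and
`∑_{j ∈ J t} (w t j)² ≤ B`.  Let `S t` be the span of all eigenvectors appearing in earlier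
rounds, and `P t` the orthogonal projection onto `S t` (a Hermitian idempotent with range in
`S t` fixing `S t` pointwise).  If `|tr(P t * O t * P t * ρ) - tr(O t * ρ)| > (3/16) ε` for
every `t`, then `m ≤ 4096 B² / (9 ε⁴)`. -/
theorem stmt_12 {d m : ℕ} {ι : Type*} [DecidableEq ι]
    (ρ : Matrix (Fin d) (Fin d) ℂ) (hρ : ρ.PosSemidef) (hρtr : ρ.trace = 1)
    (ε B : ℝ) (hε0 : 0 < ε) (hε1 : ε ≤ 1) (hB : 0 < B)
    (J : Fin m → Finset ι)
    (ψ : Fin m → ι → (Fin d → ℂ)) (w : Fin m → ι → ℝ)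
    (hortho : ∀ t, ∀ i ∈ J t, ∀ j ∈ J t,
      star (ψ t i) ⬝ᵥ ψ t j = if i = j then 1 else 0)
    (hwbig : ∀ t, ∀ j ∈ J t, ε / 2 < |w t j|)
    (hwF : ∀ t, ∑ j ∈ J t, (w t j) ^ 2 ≤ B)
    (O : Fin m → Matrix (Fin d) (Fin d) ℂ)
    (hO : ∀ t, O t = ∑ j ∈ J t, (w t j : ℂ) • Matrix.vecMulVec (ψ t j) (star (ψ t j)))
    (P : Fin m → Matrix (Fin d) (Fin d) ℂ)
    (hPH : ∀ t, (P t).IsHermitian) (hPP : ∀ t, P t * P t = P t)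
    (hPmem : ∀ t v, P t *ᵥ v ∈
      Submodule.span ℂ {x | ∃ r : Fin m, ∃ j ∈ J r, r < t ∧ x = ψ r j})
    (hPfix : ∀ t, ∀ v ∈ Submodule.span ℂ {x | ∃ r : Fin m, ∃ j ∈ J r, r < t ∧ x = ψ r j},
      P t *ᵥ v = v)
    (hdev : ∀ t, 3 / 16 * ε <
      ‖(P t * O t * P t * ρ).trace - (O t * ρ).trace‖) :
    (m : ℝ) ≤ 4096 * B ^ 2 / (9 * ε ^ 4) := by
  have hεB (t : Fin m) : ε ^ 2 ≤ 4 * B := by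
    have hJ : (J t).Nonempty := Finset.nonempty_iff_ne_empty.mpr fun hempty => by
      have hpos : 0 < 3 / 16 * ε := by positivity
      simpa [hO, hempty] using hpos.trans (hdev t)
    have hsq : (ε / 2) ^ 2 ≤ ∑ j ∈ J t, w t j ^ 2 :=
      sq_le_sum_sq_of_forall_le_abs hJ (half_pos hε0).le fun j hj => (hwbig t j hj).le
    linarith [hwF t]
  have hmε : m * (3 / 16 * ε) ^ 2 ≤ 4 * B := by
    refine le_trans ?_ (stmt_12_general hρ hρtr hB.le hortho hwF hO hPH hPmem hPfix)
    simpa using Finset.card_nsmul_le_sum Finset.univ _ _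
      fun t _ => pow_le_pow_left₀ (by positivity) (hdev t).le 2
  have hmB : m * ε ^ 2 ≤ m * (4 * B) := by
    simpa using Finset.sum_le_sum fun t (_ : t ∈ Finset.univ) => hεB t
  rw [le_div_iff₀ (by positivity)]
  calc m * (9 * ε ^ 4) = 9 * ε ^ 2 * (m * ε ^ 2) := by ring
    _ ≤ 9 * ε ^ 2 * (m * (4 * B)) := by gcongr
    _ = 1024 * B * (m * (3 / 16 * ε) ^ 2) := by ring
    _ ≤ 1024 * B * (4 * B) := mul_le_mul_of_nonneg_left hmε (by positivity)
    _ = 4096 * B ^ 2 := by ring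
end

section
/- Let ρ be a d×d density matrix, ε ∈ (0,1], and R > 0. Suppose O_1, …, O_m are d×d Hermitian matrices, where each O_t = Σ_{j∈J_t} w_{t,j} |ψ^{t,j}⟩⟨ψ^{t,j}| for a finite index set J_t, orthonormal vectors {ψ^{t,j}}_{j∈J_t} ⊆ ℂ^d, and real weights satisfying Σ_{j∈J_t} |w_{t,j}| ≤ R. Let S_t be the linear span of all ψ^{r,j} with r < t, j ∈ J_r, and let P_t be the orthogonal projection onto S_t. If for every t ∈ {1, …, m} one has |tr(P_t O_t P_t ρ) − tr(O_t ρ)| > (3/16)ε, then m ≤ 1024 R²/(9 ε²). -/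
open Matrix
open scoped ComplexOrder

/-!
Measure progress by the weight `f (p t)` that the state `f = tr (· ρ)` gives to the projection
`p t`. With `e = q - p` for projections `p ≤ q` and an observable `a = q a q`,
`a - p a p = e a + p a e`, so Cauchy–Schwarz for the GNS semi-inner product `f (x⋆ y)` bounds the
deviation `|f (p a p) - f a|` by `2 ‖a‖ √(f q - f p)`. A round with deviation at least `δ` therefore
raises the weight by at least `δ² / (4 R²)`, and the weight never exceeds `1`.
The triangle inequality `‖∑ j, w j • |ψ j⟩⟨ψ j|‖ ≤ ∑ j, |w j|` supplies the operator norm bound `R`.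
-/

open scoped MatrixOrder Matrix.Norms.L2Operator

section NonUnital

variable {A : Type*} [NonUnitalCStarAlgebra A]

theorem norm_sum_smul_le_of_isStarProjection {ι : Type*}
    (s : Finset ι) (w : ι → ℝ) (e : ι → A) (he : ∀ j ∈ s, IsStarProjection (e j)) :
    ‖∑ j ∈ s, (w j : ℂ) • e j‖ ≤ ∑ j ∈ s, |w j| := by
  refine norm_sum_le_of_le s fun j hj => ?_
  rw [norm_smul, Complex.norm_real, Real.norm_eq_abs]
  exact mul_le_of_le_one_right (abs_nonneg _) (he j hj).norm_le

variable [PartialOrder A] [StarOrderedRing A]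

theorem norm_toPreGNS_mul_le (f : A →ₚ[ℂ] ℂ) (a b : A) :
    ‖f.toPreGNS (a * b)‖ ≤ ‖a‖ * ‖f.toPreGNS b‖ :=
  (f.leftMulMapPreGNS a).le_of_opNorm_le
    (LinearMap.mkContinuous_norm_le _ (norm_nonneg a) _) (f.toPreGNS b)

theorem norm_toPreGNS_of_isStarProjection (f : A →ₚ[ℂ] ℂ) {e : A} (he : IsStarProjection e) :
    ‖f.toPreGNS e‖ = √(f e).re := by
  rw [PositiveLinearMap.preGNS_norm_def, PositiveLinearMap.ofPreGNS_toPreGNS,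
    he.isSelfAdjoint.star_eq, he.isIdempotentElem.eq]

theorem norm_apply_mul_le_norm_toPreGNS (f : A →ₚ[ℂ] ℂ) (a b : A) :
    ‖f (a * b)‖ ≤ ‖f.toPreGNS (star a)‖ * ‖f.toPreGNS b‖ := by
  simpa [PositiveLinearMap.preGNS_inner_def] using
    norm_inner_le_norm (𝕜 := ℂ) (f.toPreGNS (star a)) (f.toPreGNS b)

end NonUnital

section Unital

variable {A : Type*} [CStarAlgebra A] [PartialOrder A] [StarOrderedRing A]

theorem norm_toPreGNS_le (f : A →ₚ[ℂ] ℂ) (a : A) :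
    ‖f.toPreGNS a‖ ≤ ‖a‖ * √(f 1).re := by
  simpa [PositiveLinearMap.preGNS_norm_def] using norm_toPreGNS_mul_le f a 1

theorem norm_apply_conj_sub_apply_le (f : A →ₚ[ℂ] ℂ) {p q a : A} (hp : IsStarProjection p)
    (hq : IsStarProjection q) (hpq : p ≤ q) (ha : q * a * q = a) :
    ‖f (p * a * p) - f a‖ ≤ 2 * ‖a‖ * √(f 1).re * √(f q - f p).re := by
  set e := q - p with he_def
  have he : IsStarProjection e := (hp.le_iff_sub hq).mp hpq
  have hqa : q * a = a := by
    rw [← ha, ← mul_assoc, ← mul_assoc, hq.isIdempotentElem.eq]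
  have haq : a * q = a := by
    rw [← ha, mul_assoc, hq.isIdempotentElem.eq]
  have norm_e : ‖f.toPreGNS e‖ = √(f q - f p).re := by
    rw [norm_toPreGNS_of_isStarProjection f he, map_sub]
  have decomposition : p * a * p - a = -(e * a + p * a * e) := by
    rw [he_def, sub_mul, mul_sub, hqa, mul_assoc p a q, haq]
    abel
  have bound_left : ‖f (e * a)‖ ≤ √(f q - f p).re * (‖a‖ * √(f 1).re) := by
    refine (norm_apply_mul_le_norm_toPreGNS f e a).trans ?_
    rw [he.isSelfAdjoint.star_eq, norm_e]
    gcongr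
    exact norm_toPreGNS_le f a
  have norm_pa : ‖star (p * a)‖ ≤ ‖a‖ := by
    rw [norm_star]
    exact (norm_mul_le p a).trans (mul_le_of_le_one_left (norm_nonneg a) hp.norm_le)
  have bound_right : ‖f (p * a * e)‖ ≤ ‖a‖ * √(f 1).re * √(f q - f p).re := by
    refine (norm_apply_mul_le_norm_toPreGNS f (p * a) e).trans ?_
    rw [norm_e]
    gcongr
    exact (norm_toPreGNS_le f _).trans (by gcongr)
  calc ‖f (p * a * p) - f a‖ = ‖f (e * a) + f (p * a * e)‖ := by
        rw [← map_sub, decomposition, map_neg, map_add, norm_neg]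
    _ ≤ ‖f (e * a)‖ + ‖f (p * a * e)‖ := norm_add_le _ _
    _ ≤ 2 * ‖a‖ * √(f 1).re * √(f q - f p).re := by linarith

theorem sq_le_of_le_norm_apply_conj_sub_apply (f : A →ₚ[ℂ] ℂ) (hf : f 1 = 1) {p q a : A}
    (hp : IsStarProjection p) (hq : IsStarProjection q) (hpq : p ≤ q) (ha : q * a * q = a)
    {δ R : ℝ} (hδ : 0 ≤ δ) (haR : ‖a‖ ≤ R) (hdev : δ ≤ ‖f (p * a * p) - f a‖) :
    δ ^ 2 ≤ 4 * R ^ 2 * ((f q).re - (f p).re) := by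
  have weight_mono : 0 ≤ (f q - f p).re :=
    (Complex.le_def.mp (sub_nonneg.mpr (OrderHomClass.mono f hpq))).1
  have dev_le : δ ≤ 2 * R * √(f q - f p).re := by
    refine (hdev.trans (norm_apply_conj_sub_apply_le f hp hq hpq ha)).trans ?_
    rw [hf, Complex.one_re, Real.sqrt_one, mul_one]
    gcongr
  calc δ ^ 2 ≤ (2 * R * √(f q - f p).re) ^ 2 := by gcongr
    _ = 4 * R ^ 2 * ((f q).re - (f p).re) := by
      rw [mul_pow, mul_pow, Real.sq_sqrt weight_mono, Complex.sub_re]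
      norm_num

theorem length_mul_sq_le_of_projection_chain {m : ℕ} (f : A →ₚ[ℂ] ℂ) (hf : f 1 = 1)
    (p : Fin (m + 1) → A) (hp : ∀ k, IsStarProjection (p k)) (hmono : Monotone p)
    (a : Fin m → A) (ha : ∀ t, p t.succ * a t * p t.succ = a t)
    {δ R : ℝ} (hδ : 0 ≤ δ) (haR : ∀ t, ‖a t‖ ≤ R)
    (hdev : ∀ t, δ ≤ ‖f (p t.castSucc * a t * p t.castSucc) - f (a t)‖) :
    m * δ ^ 2 ≤ 4 * R ^ 2 := by
  have weight_first : 0 ≤ (f (p 0)).re :=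
    (Complex.le_def.mp (f.map_nonneg (hp 0).nonneg)).1
  have weight_last : (f (p (Fin.last m))).re ≤ 1 := by
    simpa [hf] using (Complex.le_def.mp (OrderHomClass.mono f (hp (Fin.last m)).le_one)).1
  have telescope : ∑ t : Fin m, ((f (p t.succ)).re - (f (p t.castSucc)).re) =
      (f (p (Fin.last m))).re - (f (p 0)).re := by
    rw [Finset.sum_sub_distrib]
    linarith [Fin.sum_univ_succ fun k => (f (p k)).re,
      Fin.sum_univ_castSucc fun k => (f (p k)).re]
  calc m * δ ^ 2 = ∑ _t : Fin m, δ ^ 2 := by simp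
    _ ≤ ∑ t : Fin m, 4 * R ^ 2 * ((f (p t.succ)).re - (f (p t.castSucc)).re) :=
      Finset.sum_le_sum fun t _ => sq_le_of_le_norm_apply_conj_sub_apply f hf (hp _) (hp _)
        (hmono t.castSucc_lt_succ.le) (ha t) hδ (haR t) (hdev t)
    _ = 4 * R ^ 2 * ((f (p (Fin.last m))).re - (f (p 0)).re) := by
      rw [← Finset.mul_sum, telescope]
    _ ≤ 4 * R ^ 2 := mul_le_of_le_one_right (by positivity) (by linarith)

theorem stmt_13_general {m : ℕ} (f : A →ₚ[ℂ] ℂ) (hf : f 1 = 1)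
    (p : Fin m → A) (hp : ∀ t, IsStarProjection (p t)) (hmono : Monotone p)
    (a : Fin m → A) (ha : ∀ r t, r < t → p t * a r * p t = a r)
    {δ R : ℝ} (hδ : 0 < δ) (haR : ∀ t, ‖a t‖ ≤ R)
    (hdev : ∀ t, δ ≤ ‖f (p t * a t * p t) - f (a t)‖) :
    m ≤ 4 * R ^ 2 / δ ^ 2 := by
  let q : Fin (m + 1) → A := Fin.snoc p 1
  have q_castSucc (t : Fin m) : q t.castSucc = p t := Fin.snoc_castSucc ..
  have q_last : q (Fin.last m) = 1 := Fin.snoc_last ..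
  have hq (k) : IsStarProjection (q k) := by
    cases k using Fin.lastCases with
    | last => exact q_last ▸ .one A
    | cast t => exact q_castSucc t ▸ hp t
  have q_mono : Monotone q := by
    intro k l hkl
    cases l using Fin.lastCases with
    | last => exact q_last ▸ (hq k).le_one
    | cast t =>
      obtain ⟨r, rfl⟩ := Fin.exists_castSucc_eq.mpr (hkl.trans_lt t.castSucc_lt_last).ne
      simpa only [q_castSucc] using hmono (Fin.castSucc_le_castSucc_iff.mp hkl)
  have support (r : Fin m) (k) (hk : r.castSucc < k) : q k * a r * q k = a r := by
    cases k using Fin.lastCases with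
    | last => rw [q_last, one_mul, mul_one]
    | cast t => rw [q_castSucc, ha r t (Fin.castSucc_lt_castSucc_iff.mp hk)]
  rw [le_div_iff₀ (by positivity)]
  exact length_mul_sq_le_of_projection_chain f hf q hq q_mono a
    (fun t => support t t.succ t.castSucc_lt_succ) hδ.le haR (by simpa only [q_castSucc] using hdev)

end Unital

section Matrix

variable {n 𝕜 : Type*} [Fintype n] [RCLike 𝕜]

theorem trace_mul_nonneg {B ρ : Matrix n n 𝕜} (hB : B.PosSemidef) (hρ : ρ.PosSemidef) :
    0 ≤ (B * ρ).trace := by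
  classical
  obtain ⟨C, rfl⟩ := CStarAlgebra.nonneg_iff_eq_star_mul_self.mp hB.nonneg
  rw [mul_assoc, trace_mul_comm]
  exact (hρ.mul_mul_conjTranspose_same C).trace_nonneg

/-- The expectation functional `B ↦ tr (B ρ)` of a positive semidefinite matrix `ρ`; it is the state
associated with `ρ` when `ρ` is a density matrix. -/
noncomputable def expectation {ρ : Matrix n n 𝕜} (hρ : ρ.PosSemidef) : Matrix n n 𝕜 →ₚ[𝕜] 𝕜 :=
  .mk₀ (traceLinearMap n 𝕜 𝕜 ∘ₗ LinearMap.mulRight 𝕜 ρ)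
    fun _ hB => trace_mul_nonneg hB.posSemidef hρ

theorem expectation_apply {ρ : Matrix n n 𝕜} (hρ : ρ.PosSemidef) (B : Matrix n n 𝕜) :
    expectation hρ B = (B * ρ).trace :=
  rfl

theorem isStarProjection_vecMulVec_self_star {R : Type*} [CommSemiring R] [StarRing R]
    {x : n → R} (hx : star x ⬝ᵥ x = 1) : IsStarProjection (vecMulVec x (star x)) where
  isIdempotentElem := by
    rw [IsIdempotentElem, vecMulVec_mul_vecMulVec, hx, one_smul]
  isSelfAdjoint := by
    rw [IsSelfAdjoint, star_eq_conjTranspose, conjTranspose_vecMulVec, star_star]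

theorem conj_sum_smul_vecMulVec_eq {R ι : Type*} [CommSemiring R] [StarRing R]
    {Q : Matrix n n R} (hQ : Q.IsHermitian) (s : Finset ι) (w : ι → R) (x : ι → n → R)
    (hx : ∀ j ∈ s, Q *ᵥ x j = x j) :
    Q * (∑ j ∈ s, w j • vecMulVec (x j) (star (x j))) * Q =
      ∑ j ∈ s, w j • vecMulVec (x j) (star (x j)) := by
  rw [Finset.mul_sum, Finset.sum_mul]
  refine Finset.sum_congr rfl fun j hj => ?_
  have fix_bra : star (x j) ᵥ* Q = star (x j) := by
    rw [← hQ.eq, ← star_mulVec, hx j hj]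
  rw [mul_smul_comm, smul_mul_assoc, mul_vecMulVec, vecMulVec_mul, hx j hj, fix_bra]

theorem le_of_forall_mulVec_mulVec_eq {P Q : Matrix n n 𝕜}
    (hP : IsStarProjection P) (hQ : IsStarProjection Q) (h : ∀ v, Q *ᵥ (P *ᵥ v) = P *ᵥ v) :
    P ≤ Q := by
  classical
  refine hP.le_of_mul_eq_right hQ (Matrix.ext_of_mulVec_single fun i => ?_)
  rw [← mulVec_mulVec, h]

end Matrix

/-- **mistake bound for low-rank observables.**
Let `ρ` be a `d × d` density matrix, `ε ∈ (0,1]`, `R > 0`.  Suppose the observables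
`O t = ∑_{j ∈ J t} w t j • |ψ t j⟩⟨ψ t j|` (for `t = 1, …, m`) are built from orthonormal
families of eigenvectors with real weights satisfying `∑_{j ∈ J t} |w t j| ≤ R`.  Let `S t` be
the span of all eigenvectors appearing in earlier rounds, and `P t` the orthogonal projection
onto `S t` (a Hermitian idempotent with range in `S t` fixing `S t` pointwise).  If
`|tr(P t * O t * P t * ρ) - tr(O t * ρ)| > (3/16) ε` for every `t`, then
`m ≤ 1024 R² / (9 ε²)`. -/
theorem stmt_13 {d m : ℕ} {ι : Type*} [DecidableEq ι]
    (ρ : Matrix (Fin d) (Fin d) ℂ) (hρ : ρ.PosSemidef) (hρtr : ρ.trace = 1)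
    (ε R : ℝ) (hε0 : 0 < ε) (hε1 : ε ≤ 1) (hR : 0 < R)
    (J : Fin m → Finset ι)
    (ψ : Fin m → ι → (Fin d → ℂ)) (w : Fin m → ι → ℝ)
    (hortho : ∀ t, ∀ i ∈ J t, ∀ j ∈ J t,
      star (ψ t i) ⬝ᵥ ψ t j = if i = j then 1 else 0)
    (hwR : ∀ t, ∑ j ∈ J t, |w t j| ≤ R)
    (O : Fin m → Matrix (Fin d) (Fin d) ℂ)
    (hO : ∀ t, O t = ∑ j ∈ J t, (w t j : ℂ) • Matrix.vecMulVec (ψ t j) (star (ψ t j)))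
    (P : Fin m → Matrix (Fin d) (Fin d) ℂ)
    (hPH : ∀ t, (P t).IsHermitian) (hPP : ∀ t, P t * P t = P t)
    (hPmem : ∀ t v, P t *ᵥ v ∈
      Submodule.span ℂ {x | ∃ r : Fin m, ∃ j ∈ J r, r < t ∧ x = ψ r j})
    (hPfix : ∀ t, ∀ v ∈ Submodule.span ℂ {x | ∃ r : Fin m, ∃ j ∈ J r, r < t ∧ x = ψ r j},
      P t *ᵥ v = v)
    (hdev : ∀ t, 3 / 16 * ε <
      ‖(P t * O t * P t * ρ).trace - (O t * ρ).trace‖) :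
    (m : ℝ) ≤ 1024 * R ^ 2 / (9 * ε ^ 2) := by
  have hP t : IsStarProjection (P t) := ⟨hPP t, hPH t⟩
  have P_mono : Monotone P := by
    refine fun r t hrt => le_of_forall_mulVec_mulVec_eq (hP r) (hP t) fun v =>
      hPfix t _ (Submodule.span_mono ?_ (hPmem r v))
    exact fun _ ⟨s, j, hj, hs, hx⟩ => ⟨s, j, hj, hs.trans_le hrt, hx⟩
  have O_supported r t (hrt : r < t) : P t * O r * P t = O r := by
    rw [hO r]
    exact conj_sum_smul_vecMulVec_eq (hPH t) _ _ _ fun j hj =>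
      hPfix t _ (Submodule.subset_span ⟨r, j, hj, hrt, rfl⟩)
  have O_norm t : ‖O t‖ ≤ R := by
    rw [hO t]
    exact (norm_sum_smul_le_of_isStarProjection _ _ _ fun j hj =>
      isStarProjection_vecMulVec_self_star (by simpa using hortho t j hj j hj)).trans (hwR t)
  calc (m : ℝ) ≤ 4 * R ^ 2 / (3 / 16 * ε) ^ 2 :=
        stmt_13_general (expectation hρ) (by rw [expectation_apply, one_mul, hρtr])
          P hP P_mono O O_supported (by positivity) O_norm fun t => (hdev t).le
    _ = 1024 * R ^ 2 / (9 * ε ^ 2) := by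
      field_simp
      norm_num
end
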